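/- arXiv:0708.0614 — 2 statements merged into one kernel-verified Lean document; each statement's English description precedes it below -/
import Mathlib

section
/- Let 0 < α < 1 and 0 < σ ≤ 1. Let f_𝔾(u) = (α·sin(πα)/((1−α)π))·u^{α−1}(1−u)^{α−1}/(u^{2α} − 2u^α(1−u)^α cos(πα) + (1−u)^{2α}) on (0,1), and let F_𝔾(y) = ∫₀^y f_𝔾(u) du be its cumulative distribution function. Define f_{α,σ}(x) = (x^{−σα/(1−α)−1}/π)·sin(πσ)·(1 − (1−x)^α)^{σ/(1−α)} for 0 < x ≤ 1, and f_{α,σ}(x) = (x^{−σα/(1−α)−1}/π)·sin(πσ·F_𝔾(1/x))·((x−1)^{2α} − 2(x−1)^α cos(πα) + 1)^{σ/(2(1−α))} for x > 1. Then f_{α,σ} is a probability density on (0,∞), and for every λ ≥ 0, ∫₀^∞ f_{α,σ}(x)·(1+λx)^{−1} dx = ((1+λ)^α − λ^α)^{σ/(1−α)}. (Proposition 5.2: f_{α,σ} is the density of the Dirichlet mean M₁(F_{Y_σ/𝔾_α}), characterized by its order-1 Cauchy–Stieltjes transform.) -/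
open MeasureTheory

/-- The density of the BFRY random variable `𝔾_α` on (0,1). -/
noncomputable def bfryDensity (α : ℝ) : ℝ → ℝ := fun u =>
  α * Real.sin (Real.pi * α) / ((1 - α) * Real.pi) *
    (u ^ (α - 1) * (1 - u) ^ (α - 1) /
      (u ^ (2 * α) - 2 * u ^ α * (1 - u) ^ α * Real.cos (Real.pi * α) + (1 - u) ^ (2 * α)))

/-- The cumulative distribution function `F_𝔾(y) = ∫₀^y f_𝔾(u) du`. -/
noncomputable def bfryCDF (α : ℝ) : ℝ → ℝ := fun y => ∫ u in (0:ℝ)..y, bfryDensity α u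

/-- The density `f_{α,σ}` of the Dirichlet mean `M₁(F_{Y_σ/𝔾_α})` (Proposition 5.2). -/
noncomputable def bfryMeanDensity (α σ : ℝ) : ℝ → ℝ := fun x =>
  if x ≤ 1 then
    x ^ (-(σ * α / (1 - α)) - 1) / Real.pi * Real.sin (Real.pi * σ) *
      (1 - (1 - x) ^ α) ^ (σ / (1 - α))
  else
    x ^ (-(σ * α / (1 - α)) - 1) / Real.pi * Real.sin (Real.pi * σ * bfryCDF α (1 / x)) *
      ((x - 1) ^ (2 * α) - 2 * (x - 1) ^ α * Real.cos (Real.pi * α) + 1) ^ (σ / (2 * (1 - α)))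


namespace BFRY
open Set Filter Topology

/-- boundary function -/
noncomputable def q (α u : ℝ) : ℂ :=
  ⟨(1 - u) ^ α - u ^ α * Real.cos (Real.pi * α), -(u ^ α * Real.sin (Real.pi * α))⟩

lemma sin_pos {α : ℝ} (h0 : 0 < α) (h1 : α < 1) : 0 < Real.sin (Real.pi * α) :=
  Real.sin_pos_of_pos_of_lt_pi (by positivity) (by nlinarith [Real.pi_pos])

lemma q_slit {α u : ℝ} (h0 : 0 < α) (h1 : α < 1) (hu : 0 ≤ u) : q α u ∈ Complex.slitPlane := by
  rw [Complex.mem_slitPlane_iff]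
  rcases hu.eq_or_lt with h | h
  · left
    subst h
    simp [q, Real.zero_rpow h0.ne']
  · right
    have := sin_pos h0 h1
    have : 0 < u ^ α := by positivity
    simp only [q]
    nlinarith [mul_pos this (sin_pos h0 h1)]

lemma normSq_q {α u : ℝ} (hu : 0 ≤ u) (hu1 : u ≤ 1) : Complex.normSq (q α u) =
    u ^ (2 * α) - 2 * u ^ α * (1 - u) ^ α * Real.cos (Real.pi * α) + (1 - u) ^ (2 * α) := by
  have e1 : u ^ (2 * α) = (u ^ α) ^ 2 := by
    rw [← Real.rpow_natCast, ← Real.rpow_mul hu]; ring_nf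
  have e2 : (1 - u) ^ (2 * α) = ((1 - u) ^ α) ^ 2 := by
    rw [← Real.rpow_natCast, ← Real.rpow_mul (by linarith)]; ring_nf
  rw [e1, e2, Complex.normSq_apply]
  simp only [q]
  linear_combination (u ^ α) ^ 2 * Real.sin_sq_add_cos_sq (Real.pi * α)

lemma q_eq (α u : ℝ) : q α u = (((1 - u) ^ α : ℝ) : ℂ) - ((u ^ α : ℝ) : ℂ) *
    (⟨Real.cos (Real.pi * α), Real.sin (Real.pi * α)⟩ : ℂ) := by
  apply Complex.ext <;> simp [q]

lemma q_cont {α : ℝ} (h0 : 0 < α) : Continuous (q α) := by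
  have : q α = fun u => (((1 - u) ^ α : ℝ) : ℂ) - ((u ^ α : ℝ) : ℂ) *
    (⟨Real.cos (Real.pi * α), Real.sin (Real.pi * α)⟩ : ℂ) := funext (q_eq α)
  rw [this]
  have h1 : Continuous fun u : ℝ => (1 - u) ^ α :=
    (Real.continuous_rpow_const h0.le).comp (by fun_prop)
  have h2 : Continuous fun u : ℝ => u ^ α := Real.continuous_rpow_const h0.le
  exact (Complex.continuous_ofReal.comp h1).sub
    ((Complex.continuous_ofReal.comp h2).mul continuous_const)

lemma q_deriv {α u : ℝ} (hu : 0 < u) (hu1 : u < 1) : HasDerivAt (q α)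
    (((-(α * (1 - u) ^ (α - 1)) : ℝ) : ℂ) - ((α * u ^ (α - 1) : ℝ) : ℂ) *
    (⟨Real.cos (Real.pi * α), Real.sin (Real.pi * α)⟩ : ℂ)) u := by
  have : q α = fun u => (((1 - u) ^ α : ℝ) : ℂ) - ((u ^ α : ℝ) : ℂ) *
    (⟨Real.cos (Real.pi * α), Real.sin (Real.pi * α)⟩ : ℂ) := funext (q_eq α)
  rw [this]
  have h1 : HasDerivAt (fun u : ℝ => (1 - u) ^ α) (-(α * (1 - u) ^ (α - 1))) u := by
    have h := ((hasDerivAt_id u).const_sub 1).rpow_const (p := α) (Or.inl (by simp; linarith))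
    refine HasDerivAt.congr_deriv h ?_
    change -1 * α * (1 - u) ^ (α - 1) = _
    ring
  have h2 : HasDerivAt (fun u : ℝ => u ^ α) (α * u ^ (α - 1)) u :=
    Real.hasDerivAt_rpow_const (Or.inl hu.ne')
  exact h1.ofReal_comp.sub (h2.ofReal_comp.mul_const _)

lemma arg_deriv {α u : ℝ} (h0 : 0 < α) (h1 : α < 1) (hu : 0 < u) (hu1 : u < 1) :
    HasDerivAt (fun u => -(q α u).arg / (Real.pi * (1 - α))) (bfryDensity α u) u := by
  have hs := q_slit h0 h1 hu.le
  have h := (q_deriv (α := α) hu hu1).clog_real hs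
  have h2 := Complex.imCLM.hasFDerivAt.comp_hasDerivAt u h
  have hf : (⇑Complex.imCLM ∘ fun t => Complex.log (q α t)) = fun u => (q α u).arg := by
    funext t; simp [Complex.log_im]
  rw [hf] at h2
  have h4 := (h2.neg).div_const (Real.pi * (1 - α))
  refine HasDerivAt.congr_deriv h4 ?_
  symm
  have hn : Complex.normSq (q α u) ≠ 0 := by
    rw [Ne, Complex.normSq_eq_zero]; exact Complex.slitPlane_ne_zero hs
  have hA : (1 - u) ^ α = (1 - u) ^ (α - 1) * (1 - u) := by
    rw [← Real.rpow_add_one (by linarith)]; ring_nf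
  have hB : u ^ α = u ^ (α - 1) * u := by
    rw [← Real.rpow_add_one (by linarith)]; ring_nf
  have ha : 1 - α ≠ 0 := by linarith
  have hp := Real.pi_pos.ne'
  rw [bfryDensity, ← normSq_q hu.le hu1.le, Complex.imCLM_apply, Complex.div_im]
  generalize Complex.normSq (q α u) = N at hn
  simp only [q, Complex.sub_re, Complex.sub_im, Complex.mul_re, Complex.mul_im, Complex.ofReal_re,
    Complex.ofReal_im]
  rw [hA, hB]
  field_simp
  ring

lemma density_nonneg {α u : ℝ} (h0 : 0 < α) (h1 : α < 1) (hu : 0 < u) (hu1 : u < 1) :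
    0 ≤ bfryDensity α u := by
  rw [bfryDensity, ← normSq_q hu.le hu1.le]
  have := sin_pos h0 h1
  have : 0 < 1 - α := by linarith
  have : 0 < 1 - u := by linarith
  have := Complex.normSq_nonneg (q α u)
  positivity

lemma arg_cont {α : ℝ} (h0 : 0 < α) (h1 : α < 1) :
    ContinuousOn (fun u => -(q α u).arg / (Real.pi * (1 - α))) (Ici 0) := by
  intro u hu
  have h : ContinuousAt (fun u => (q α u).arg) u :=
    ContinuousAt.comp (f := q α) (Complex.continuousAt_arg (q_slit h0 h1 hu)) (q_cont h0).continuousAt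
  exact (h.neg.div_const _).continuousWithinAt

lemma cdf_eq {α y : ℝ} (h0 : 0 < α) (h1 : α < 1) (hy : 0 ≤ y) (hy1 : y ≤ 1) :
    bfryCDF α y = -(q α y).arg / (Real.pi * (1 - α)) := by
  have hc : ContinuousOn (fun u => -(q α u).arg / (Real.pi * (1 - α))) (Icc 0 y) :=
    (arg_cont h0 h1).mono Icc_subset_Ici_self
  have hd : ∀ x ∈ Ioo 0 y, HasDerivAt (fun u => -(q α u).arg / (Real.pi * (1 - α)))
    (bfryDensity α x) x := fun x hx => arg_deriv h0 h1 hx.1 (hx.2.trans_le hy1)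
  have hi := intervalIntegral.integrableOn_deriv_of_nonneg hc hd
    (fun x hx => density_nonneg h0 h1 hx.1 (hx.2.trans_le hy1))
  have := intervalIntegral.integral_eq_sub_of_hasDerivAt_of_le hy hc hd
    ((intervalIntegrable_iff_integrableOn_Ioc_of_le hy).2 hi)
  rw [bfryCDF, this]
  have : q α 0 = 1 := by
    apply Complex.ext <;> simp [q, Real.zero_rpow h0.ne']
  simp [this]

lemma q_one {α : ℝ} (h0 : 0 < α) (h1 : α < 1) : (q α 1).arg = -(Real.pi * (1 - α)) := by
  have h := Complex.arg_mul_cos_add_sin_mul_I (r := 1) one_pos (θ := -(Real.pi * (1 - α)))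
    ⟨by nlinarith [Real.pi_pos], by nlinarith [Real.pi_pos]⟩
  rw [← h]
  congr 1
  have e : -(Real.pi * (1 - α)) = Real.pi * α - Real.pi := by ring
  rw [e, ← Complex.ofReal_cos, ← Complex.ofReal_sin, Real.cos_sub_pi, Real.sin_sub_pi]
  apply Complex.ext <;>
    simp [q, Real.zero_rpow h0.ne', -Complex.ofReal_cos, -Complex.ofReal_sin, -Complex.ofReal_mul]

lemma cdf_mem {α y : ℝ} (h0 : 0 < α) (h1 : α < 1) (hy : 0 ≤ y) (hy1 : y ≤ 1) :
    0 ≤ bfryCDF α y ∧ bfryCDF α y ≤ 1 := by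
  have hm : MonotoneOn (fun u => -(q α u).arg / (Real.pi * (1 - α))) (Icc 0 1) := by
    apply monotoneOn_of_deriv_nonneg (convex_Icc 0 1) ((arg_cont h0 h1).mono Icc_subset_Ici_self)
    · rw [interior_Icc]
      intro x hx
      exact (arg_deriv h0 h1 hx.1 hx.2).differentiableAt.differentiableWithinAt
    · rw [interior_Icc]
      intro x hx
      rw [(arg_deriv h0 h1 hx.1 hx.2).deriv]
      exact density_nonneg h0 h1 hx.1 hx.2
  have a := hm (left_mem_Icc.2 zero_le_one) ⟨hy, hy1⟩ hy
  have b := hm ⟨hy, hy1⟩ (right_mem_Icc.2 zero_le_one) hy1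
  simp only [← cdf_eq h0 h1 hy hy1, ← cdf_eq h0 h1 le_rfl zero_le_one] at a b
  rw [q_one h0 h1] at b
  constructor
  · simpa [bfryCDF] using a
  · rwa [neg_neg, div_self] at b
    have : 0 < 1 - α := by linarith
    positivity

lemma dens_nonneg (α σ : ℝ) (hα0 : 0 < α) (hα1 : α < 1) (hσ0 : 0 < σ) (hσ1 : σ ≤ 1) :
    ∀ x ∈ Set.Ioi (0:ℝ), 0 ≤ bfryMeanDensity α σ x := by
  intro x hx
  have hx : 0 < x := hx
  have hp := Real.pi_pos
  rw [bfryMeanDensity]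
  split_ifs with h
  · have h1 : 0 ≤ Real.sin (Real.pi * σ) :=
      Real.sin_nonneg_of_nonneg_of_le_pi (by positivity) (by nlinarith)
    have h2 : 0 ≤ 1 - (1 - x) ^ α := by
      have := Real.rpow_le_one (x := 1 - x) (z := α) (by linarith) (by linarith) hα0.le
      linarith
    positivity
  · push Not at h
    have hy0 : 0 ≤ 1 / x := by positivity
    have hy1 : 1 / x ≤ 1 := by rw [div_le_one hx]; exact h.le
    obtain ⟨ha, hb⟩ := cdf_mem hα0 hα1 hy0 hy1
    have h1 : 0 ≤ Real.sin (Real.pi * σ * bfryCDF α (1 / x)) := by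
      apply Real.sin_nonneg_of_nonneg_of_le_pi (by positivity)
      have : σ * bfryCDF α (1 / x) ≤ 1 := mul_le_one₀ hσ1 ha hb
      nlinarith
    have h2 : 0 ≤ (x - 1) ^ (2 * α) - 2 * (x - 1) ^ α * Real.cos (Real.pi * α) + 1 := by
      have e1 : (x - 1) ^ (2 * α) = ((x - 1) ^ α) ^ 2 := by
        rw [← Real.rpow_natCast, ← Real.rpow_mul (by linarith)]; ring_nf
      rw [e1]
      nlinarith [sq_nonneg ((x - 1) ^ α - Real.cos (Real.pi * α)), Real.cos_sq_le_one (Real.pi * α)]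
    positivity

/-- the closed strip -/
def S : Set ℂ := {v | 0 ≤ v.im ∧ v.im ≤ Real.pi}

noncomputable def Q (α : ℝ) (v : ℂ) : ℂ := (1 + Complex.exp v) ^ (α : ℂ) - Complex.exp (α * v)

noncomputable def E (α s : ℝ) (v : ℂ) : ℂ := (Q α v) ^ (s : ℂ)

lemma cpow_cont {α : ℝ} (h0 : 0 < α) :
    ContinuousOn (fun z : ℂ => z ^ (α : ℂ)) {z | 0 ≤ z.im} := by
  intro z hz
  by_cases h : 0 ≤ z.re ∨ z.im ≠ 0
  · exact (Complex.continuousAt_cpow_const_of_re_pos h (by simpa using h0)).continuousWithinAt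
  · push Not at h
    have hl := Complex.continuousWithinAt_log_of_re_neg_of_im_zero h.1 h.2
    have hz0 : z ≠ 0 := by rintro rfl; simp at h
    have h2 : ContinuousWithinAt (fun z : ℂ => Complex.exp (Complex.log z * α)) {z | 0 ≤ z.im} z :=
      Complex.continuous_exp.continuousAt.comp_continuousWithinAt (hl.mul continuousWithinAt_const)
    refine h2.congr_of_eventuallyEq ?_ (Complex.cpow_def_of_ne_zero hz0 _)
    have : ∀ᶠ w in 𝓝[{z | 0 ≤ z.im}] z, w ≠ 0 := nhdsWithin_le_nhds (isOpen_ne.mem_nhds hz0)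
    filter_upwards [this] with w hw
    exact Complex.cpow_def_of_ne_zero hw _

lemma exp_im_nonneg {v : ℂ} (hv : v ∈ S) : 0 ≤ (Complex.exp v).im := by
  rw [Complex.exp_im]
  have := Real.sin_nonneg_of_nonneg_of_le_pi hv.1 hv.2
  positivity

lemma Q_cont {α : ℝ} (h0 : 0 < α) : ContinuousOn (Q α) S := by
  unfold Q
  apply ContinuousOn.sub
  · apply (cpow_cont h0).comp (by fun_prop)
    intro v hv
    simpa using exp_im_nonneg hv
  · fun_prop

lemma arg_le {z : ℂ} (hz : 0 ≤ z.im) (hz0 : z ≠ 0) : (1 + z).arg ≤ z.arg := by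
  by_contra! h
  have a0 : 0 ≤ z.arg := Complex.arg_nonneg_iff.2 hz
  have a1 : (1 + z).arg ≤ Real.pi := Complex.arg_le_pi _
  have hs : ‖1 + z‖ * ‖z‖ * Real.sin ((1 + z).arg - z.arg) = - z.im := by
    rw [Real.sin_sub]
    have e1 := Complex.norm_mul_cos_arg z
    have e2 := Complex.norm_mul_sin_arg z
    have e3 := Complex.norm_mul_cos_arg (1 + z)
    have e4 := Complex.norm_mul_sin_arg (1 + z)
    calc _ = (‖1 + z‖ * Real.sin (1 + z).arg) * (‖z‖ * Real.cos z.arg) -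
        (‖1 + z‖ * Real.cos (1 + z).arg) * (‖z‖ * Real.sin z.arg) := by ring
      _ = _ := by rw [e1, e2, e3, e4]; simp; ring
  have hz1 : 1 + z ≠ 0 := by
    intro h'
    rw [h'] at h
    simp at h
    linarith
  have p1 : 0 < ‖1 + z‖ := norm_pos_iff.2 hz1
  have p2 : 0 < ‖z‖ := norm_pos_iff.2 hz0
  rcases (show (1 + z).arg - z.arg ≤ Real.pi by linarith).eq_or_lt with h' | h'
  · have b1 : (1 + z).arg = Real.pi := by linarith
    have b2 : z.arg = 0 := by linarith
    rw [Complex.arg_eq_pi_iff] at b1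
    rw [Complex.arg_eq_zero_iff] at b2
    have := b1.1
    simp at this
    linarith [b2.1]
  · have := Real.sin_pos_of_pos_of_lt_pi (by linarith) h'
    have : 0 < ‖1 + z‖ * ‖z‖ * Real.sin ((1 + z).arg - z.arg) := by positivity
    linarith

lemma arg_exp' {v : ℂ} (hv : v ∈ S) : (Complex.exp v).arg = v.im := by
  rw [← Complex.log_im, Complex.log_exp (by linarith [hv.1, Real.pi_pos]) hv.2]

lemma Q_real (α u : ℝ) : Q α (u : ℂ) = (((1 + Real.exp u) ^ α - (Real.exp u) ^ α : ℝ) : ℂ) := by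
  rw [Q]
  have : (1 : ℂ) + Complex.exp u = ((1 + Real.exp u : ℝ) : ℂ) := by push_cast; rfl
  rw [this, Complex.ofReal_sub, Complex.ofReal_cpow (by positivity), ← Real.exp_mul]
  push_cast
  ring_nf

lemma Q_real_pos {α : ℝ} (h0 : 0 < α) (u : ℝ) :
    0 < (1 + Real.exp u) ^ α - (Real.exp u) ^ α := by
  have := Real.rpow_lt_rpow (Real.exp_pos u).le (show Real.exp u < 1 + Real.exp u by linarith) h0
  linarith

lemma Q_slit {α : ℝ} (h0 : 0 < α) (h1 : α < 1) {v : ℂ} (hv : v ∈ S) :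
    Q α v ∈ Complex.slitPlane := by
  rcases hv.1.eq_or_lt with hy | hy
  · have : v = (v.re : ℂ) := by apply Complex.ext <;> simp [← hy]
    rw [this, Q_real, Complex.ofReal_mem_slitPlane]
    exact Q_real_pos h0 _
  by_contra hq
  rw [Complex.mem_slitPlane_iff] at hq
  push Not at hq
  obtain ⟨hr, hi⟩ := hq
  have hle := arg_le (exp_im_nonneg hv) (Complex.exp_ne_zero v)
  rw [arg_exp' hv] at hle
  have hφ : 0 ≤ (1 + Complex.exp v).arg :=
    Complex.arg_nonneg_iff.2 (by simpa using exp_im_nonneg hv)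
  have hb : Complex.exp (α * v) =
      ((Real.exp (α * v.re) : ℝ) : ℂ) * (Real.cos (v.im * α) + Real.sin (v.im * α) * Complex.I) := by
    apply Complex.ext <;> simp [Complex.exp_re, Complex.exp_im, mul_comm,
      -Complex.ofReal_cos, -Complex.ofReal_sin, -Complex.ofReal_exp, -Complex.ofReal_mul]
  have hb0 := Real.exp_pos (α * v.re)
  have ha0 : 0 ≤ ‖1 + Complex.exp v‖ ^ α := by positivity
  have hbn : Real.exp (α * v.re) = ‖Complex.exp v‖ ^ α := by
    rw [Complex.norm_exp, ← Real.exp_mul, mul_comm]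
  rw [Q, Complex.cpow_ofReal, hb] at hr hi
  simp [-Complex.ofReal_cos, -Complex.ofReal_sin, -Complex.ofReal_exp, -Complex.ofReal_mul] at hr hi
  set a := ‖1 + Complex.exp v‖ ^ α with ha
  set b := Real.exp (α * v.re) with hbdef
  set φ := (1 + Complex.exp v).arg with hφd
  have hp := Real.pi_pos
  have s1 : 0 < Real.sin (v.im * α) :=
    Real.sin_pos_of_pos_of_lt_pi (by positivity) (by nlinarith [hv.2])
  have s2 : 0 ≤ Real.sin (v.im * α - φ * α) :=
    Real.sin_nonneg_of_nonneg_of_le_pi (by nlinarith) (by nlinarith [hv.2])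
  have key : a * Real.sin (v.im * α - φ * α) +
      (b * Real.cos (v.im * α) - a * Real.cos (φ * α)) * Real.sin (v.im * α) = 0 := by
    rw [Real.sin_sub]
    linear_combination (-Real.cos (v.im * α)) * hi
  have k1 : 0 ≤ a * Real.sin (v.im * α - φ * α) := by positivity
  have k2 : 0 ≤ (b * Real.cos (v.im * α) - a * Real.cos (φ * α)) * Real.sin (v.im * α) :=
    mul_nonneg (by linarith) s1.le
  have k3 : (b * Real.cos (v.im * α) - a * Real.cos (φ * α)) * Real.sin (v.im * α) = 0 := by linarith
  have k4 : a * Real.sin (v.im * α - φ * α) = 0 := by linarith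
  have k5 : b * Real.cos (v.im * α) = a * Real.cos (φ * α) := by
    rcases mul_eq_zero.1 k3 with h | h <;> linarith
  have k6 : a * Real.sin (φ * α) = b * Real.sin (v.im * α) := by linarith
  have k7 : a ^ 2 = b ^ 2 := by
    calc a ^ 2 = (a * Real.sin (φ * α)) ^ 2 + (a * Real.cos (φ * α)) ^ 2 := by
          rw [mul_pow, mul_pow, ← mul_add, Real.sin_sq_add_cos_sq, mul_one]
      _ = (b * Real.sin (v.im * α)) ^ 2 + (b * Real.cos (v.im * α)) ^ 2 := by rw [k5, k6]
      _ = b ^ 2 := by rw [mul_pow, mul_pow, ← mul_add, Real.sin_sq_add_cos_sq, mul_one]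
  have k8 : a = b := (sq_eq_sq₀ ha0 hb0.le).1 k7
  have k9 : Real.sin (v.im * α - φ * α) = 0 := by
    rcases mul_eq_zero.1 k4 with h | h
    · linarith
    · exact h
  have k10 : v.im * α - φ * α = 0 := by
    by_contra hne
    have : 0 ≤ v.im * α - φ * α := by nlinarith
    have := Real.sin_pos_of_pos_of_lt_pi (lt_of_le_of_ne this (Ne.symm hne)) (by nlinarith [hv.2])
    linarith
  have k11 : φ = v.im := by
    have : (v.im - φ) * α = 0 := by linarith
    rcases mul_eq_zero.1 this with h | h <;> linarith
  have k12 : ‖1 + Complex.exp v‖ = ‖Complex.exp v‖ := by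
    rw [k8, hbn] at ha
    exact ((Real.rpow_left_inj (norm_nonneg _) (norm_nonneg _) h0.ne').1 ha).symm
  have := Complex.ext_norm_arg k12 (by rw [arg_exp' hv]; exact k11)
  simp at this

lemma Q_diff {α : ℝ} {v : ℂ} (hv : 0 ≤ v.im) (hv' : v.im < Real.pi) :
    DifferentiableAt ℂ (Q α) v := by
  unfold Q
  apply DifferentiableAt.sub
  · apply DifferentiableAt.cpow (by fun_prop) (by fun_prop)
    rw [Complex.mem_slitPlane_iff]
    rcases hv.eq_or_lt with h | h
    · left
      simp [Complex.exp_re, ← h]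
      positivity
    · right
      simp [Complex.exp_im]
      exact (Real.sin_pos_of_pos_of_lt_pi h hv').ne'
  · fun_prop

lemma Q_left {α : ℝ} (h0 : 0 < α) : Tendsto (Q α) (comap Complex.re atBot) (𝓝 1) := by
  unfold Q
  have h1 : Tendsto (fun v : ℂ => (1 + Complex.exp v) ^ (α : ℂ)) (comap Complex.re atBot) (𝓝 1) := by
    have : ContinuousAt (fun t : ℂ => (1 + t) ^ (α : ℂ)) 0 := by
      apply ContinuousAt.comp (f := fun t : ℂ => 1 + t) (g := fun z : ℂ => z ^ (α : ℂ))
      · exact continuousAt_cpow_const (by simp)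
      · fun_prop
    have h := this.tendsto.comp Complex.tendsto_exp_comap_re_atBot
    simpa [Function.comp_def] using h
  have h2 : Tendsto (fun v : ℂ => Complex.exp (α * v)) (comap Complex.re atBot) (𝓝 0) := by
    apply Complex.tendsto_exp_comap_re_atBot.comp
    rw [tendsto_comap_iff]
    have : (Complex.re ∘ fun v : ℂ => (α : ℂ) * v) = fun v => α * v.re := by funext v; simp
    rw [this]
    exact (tendsto_id.const_mul_atBot h0).comp tendsto_comap
  simpa using h1.sub h2

lemma Q_right_eq {α : ℝ} {v : ℂ} (hv : v ∈ S) (hre : 0 < v.re) :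
    Q α v = Complex.exp (α * v) * ((1 + Complex.exp (-v)) ^ (α : ℂ) - 1) := by
  have hn : ‖Complex.exp (-v)‖ < 1 := by
    rw [Complex.norm_exp]; simpa using hre
  have hn1 : (1 : ℂ) + Complex.exp (-v) ≠ 0 := by
    intro h
    have : Complex.exp (-v) = -1 := by linear_combination h
    rw [this] at hn; simp at hn
  have hre' : 0 < (1 + Complex.exp (-v)).re := by
    have := (abs_le.1 ((Complex.abs_re_le_norm (Complex.exp (-v))))).1
    simp only [Complex.add_re, Complex.one_re]; linarith
  have hn2 : (1 : ℂ) + Complex.exp v ≠ 0 := by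
    intro h
    apply hn1
    rw [Complex.exp_neg]
    field_simp
    linear_combination h
  have hexp : Complex.exp (v + Complex.log (1 + Complex.exp (-v))) = 1 + Complex.exp v := by
    rw [Complex.exp_add, Complex.exp_log hn1, mul_add, ← Complex.exp_add]
    simp [add_comm]
  have hlog : Complex.log (1 + Complex.exp v) = v + Complex.log (1 + Complex.exp (-v)) := by
    rw [← hexp, Complex.log_exp]
    · rw [Complex.add_im, Complex.log_im]
      have := (abs_lt.1 (Complex.abs_arg_lt_pi_div_two_iff.2 (Or.inl hre'))).1
      linarith [hv.1, Real.pi_pos]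
    · rw [Complex.add_im, Complex.log_im]
      have : (1 + Complex.exp (-v)).arg ≤ 0 := by
        by_contra! hc
        have h3 := (abs_lt.1 (Complex.abs_arg_lt_pi_div_two_iff.2 (Or.inl hre'))).2
        have h4 := Real.sin_pos_of_pos_of_lt_pi hc (by linarith [Real.pi_pos])
        have h5 := Complex.norm_mul_sin_arg (1 + Complex.exp (-v))
        have h6 : 0 < ‖1 + Complex.exp (-v)‖ := norm_pos_iff.2 hn1
        have h7 : (1 + Complex.exp (-v)).im ≤ 0 := by
          have := Real.sin_nonneg_of_nonneg_of_le_pi hv.1 hv.2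
          simp [Complex.exp_im]
          positivity
        nlinarith [mul_pos h6 h4]
      linarith [hv.2]
  rw [Q, Complex.cpow_def_of_ne_zero hn2, Complex.cpow_def_of_ne_zero hn1, hlog, add_mul,
    Complex.exp_add]
  ring_nf

lemma N_lim {α : ℝ} (h1 : α < 1) :
    Tendsto (fun t : ℂ => ‖t‖ ^ (-α) * ‖(1 + t) ^ (α : ℂ) - 1‖) (𝓝[≠] 0) (𝓝 0) := by
  have hd : HasDerivAt (fun t : ℂ => (1 + t) ^ (α : ℂ)) (α * (1 + 0) ^ ((α : ℂ) - 1) * 1) 0 :=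
    ((hasDerivAt_id (0 : ℂ)).const_add 1).cpow_const (by simp)
  have hs := (hasDerivAt_iff_tendsto_slope.1 hd).norm
  have hz : Tendsto (fun t : ℂ => ‖t‖ ^ (1 - α)) (𝓝[≠] 0) (𝓝 0) := by
    have : Continuous (fun t : ℂ => ‖t‖ ^ (1 - α)) :=
      (Real.continuous_rpow_const (by linarith)).comp continuous_norm
    have h := this.tendsto 0
    rw [norm_zero, Real.zero_rpow (by linarith)] at h
    exact h.mono_left nhdsWithin_le_nhds
  have h := hs.mul hz
  rw [mul_zero] at h
  refine h.congr' ?_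
  filter_upwards [self_mem_nhdsWithin] with t ht
  have ht : t ≠ 0 := ht
  have hp : 0 < ‖t‖ := norm_pos_iff.2 ht
  rw [slope_def_field]
  simp only [add_zero, Complex.one_cpow, sub_zero, norm_div]
  rw [Real.rpow_sub hp, Real.rpow_neg hp.le, Real.rpow_one]
  field_simp

lemma Q_right {α : ℝ} (h0 : 0 < α) (h1 : α < 1) :
    Tendsto (Q α) (comap Complex.re atTop ⊓ 𝓟 S) (𝓝 0) := by
  rw [tendsto_zero_iff_norm_tendsto_zero]
  have hneg : Tendsto (fun v : ℂ => -v) (comap Complex.re atTop) (comap Complex.re atBot) := by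
    rw [tendsto_comap_iff]
    exact tendsto_neg_atTop_atBot.comp tendsto_comap
  have h := ((N_lim h1).comp (Complex.tendsto_exp_comap_re_atBot_nhdsNE.comp hneg)).mono_left
    (inf_le_left (b := 𝓟 S))
  refine h.congr' ?_
  have e1 : ∀ᶠ v : ℂ in comap Complex.re atTop ⊓ 𝓟 S, 0 < v.re :=
    mem_inf_of_left (tendsto_comap.eventually (eventually_gt_atTop 0))
  have e2 : ∀ᶠ v : ℂ in comap Complex.re atTop ⊓ 𝓟 S, v ∈ S := mem_inf_of_right (mem_principal_self S)
  filter_upwards [e1, e2] with v hv hS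
  rw [Q_right_eq hS hv, norm_mul]
  simp only [Function.comp]
  congr 1
  rw [Complex.norm_exp, Complex.norm_exp, ← Real.exp_mul]
  simp [mul_comm]

section
variable {α s : ℝ}

lemma E_cont (h0 : 0 < α) (h1 : α < 1) : ContinuousOn (E α s) S := fun v hv =>
  ContinuousAt.comp_continuousWithinAt (g := fun z : ℂ => z ^ (s : ℂ))
    (continuousAt_cpow_const (Q_slit h0 h1 hv)) (Q_cont h0 v hv)

lemma E_diff (h0 : 0 < α) (h1 : α < 1) {v : ℂ} (hv : 0 ≤ v.im) (hv' : v.im < Real.pi) :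
    DifferentiableAt ℂ (E α s) v :=
  (Q_diff hv hv').cpow (by fun_prop) (Q_slit h0 h1 ⟨hv, hv'.le⟩)

lemma E_left (h0 : 0 < α) : Tendsto (E α s) (comap Complex.re atBot) (𝓝 1) := by
  have h : ContinuousAt (fun z : ℂ => z ^ (s : ℂ)) 1 := continuousAt_cpow_const (by simp)
  have h2 := h.tendsto.comp (Q_left h0)
  rw [Complex.one_cpow] at h2
  exact h2

lemma E_right (h0 : 0 < α) (h1 : α < 1) (hs : 0 < s) :
    Tendsto (E α s) (comap Complex.re atTop ⊓ 𝓟 S) (𝓝 0) := by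
  have h : ContinuousAt (fun z : ℂ => z ^ (s : ℂ)) 0 :=
    Complex.continuousAt_cpow_const_of_re_pos (by simp) (by simpa using hs)
  have h2 := h.tendsto.comp (Q_right h0 h1)
  rw [Complex.zero_cpow (by exact_mod_cast hs.ne')] at h2
  exact h2

lemma E_real (h0 : 0 < α) (u : ℝ) :
    E α s u = ((((1 + Real.exp u) ^ α - (Real.exp u) ^ α) ^ s : ℝ) : ℂ) := by
  rw [E, Q_real, Complex.ofReal_cpow (Q_real_pos h0 u).le]

end

lemma exp_pi (u : ℝ) : Complex.exp (u + Real.pi * Complex.I) = ((-Real.exp u : ℝ) : ℂ) := by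
  rw [Complex.exp_add, Complex.exp_pi_mul_I]; simp

lemma exp_pi_mul (α u : ℝ) : Complex.exp (α * (u + Real.pi * Complex.I)) =
    (((Real.exp u) ^ α : ℝ) : ℂ) * (⟨Real.cos (Real.pi * α), Real.sin (Real.pi * α)⟩ : ℂ) := by
  rw [← Real.exp_mul]
  apply Complex.ext <;> simp [Complex.exp_re, Complex.exp_im, mul_comm, -Complex.ofReal_exp]

lemma Q_top_le {α u : ℝ} (hu : Real.exp u ≤ 1) :
    Q α (u + Real.pi * Complex.I) = q α (Real.exp u) := by
  rw [Q, q_eq, exp_pi, exp_pi_mul, Complex.ofReal_cpow (x := 1 - Real.exp u) (by linarith)]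
  congr 2
  push_cast; ring

lemma Q_top_ge {α u : ℝ} (hu : 1 ≤ Real.exp u) :
    Q α (u + Real.pi * Complex.I) = (((Real.exp u) ^ α - (Real.exp u - 1) ^ α : ℝ) : ℂ) *
      (Complex.cos (-(Real.pi * (1 - α)) : ℝ) + Complex.sin (-(Real.pi * (1 - α)) : ℝ) * Complex.I) := by
  have e1 : (1 : ℂ) + ((-Real.exp u : ℝ) : ℂ) = ((1 - Real.exp u : ℝ) : ℂ) := by push_cast; ring
  have e2 : -((1 - Real.exp u : ℝ) : ℂ) = ((Real.exp u - 1 : ℝ) : ℂ) := by push_cast; ring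
  have e3 : Complex.exp (Real.pi * Complex.I * α) =
      (⟨Real.cos (Real.pi * α), Real.sin (Real.pi * α)⟩ : ℂ) := by
    apply Complex.ext <;> simp [Complex.exp_re, Complex.exp_im]
  rw [Q, exp_pi, exp_pi_mul, e1, Complex.ofReal_cpow_of_nonpos (by linarith), e2, e3,
    ← Complex.ofReal_cpow (by linarith)]
  have e : -(Real.pi * (1 - α)) = Real.pi * α - Real.pi := by ring
  rw [e, ← Complex.ofReal_cos, ← Complex.ofReal_sin, Real.cos_sub_pi, Real.sin_sub_pi]
  apply Complex.ext <;>
    simp [-Complex.ofReal_cos, -Complex.ofReal_sin, -Complex.ofReal_mul] <;> ring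

lemma side {g : ℂ → ℂ} {c : ℂ} {l : Filter ℝ} {φ : ℝ → ℝ} (hg : ContinuousOn g S)
    (hl : Tendsto g (comap Complex.re l ⊓ 𝓟 S) (𝓝 c)) (hφ : Tendsto φ atTop l) :
    Tendsto (fun R : ℝ => ∫ y in (0 : ℝ)..Real.pi, g (φ R + y * Complex.I)) atTop
      (𝓝 (Real.pi * c)) := by
  have hpi := Real.pi_pos.le
  have hmem : ∀ (r y : ℝ), y ∈ Icc 0 Real.pi → ((r : ℂ) + y * Complex.I) ∈ S := by
    intro r y hy
    simpa [S] using hy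
  have hconst : (Real.pi * c : ℂ) = ∫ y in (0 : ℝ)..Real.pi, c := by simp
  rw [hconst]
  apply intervalIntegral.tendsto_integral_filter_of_dominated_convergence (fun _ => ‖c‖ + 1)
  · refine Eventually.of_forall fun R => ?_
    rw [uIoc_of_le hpi]
    have : ContinuousOn (fun y : ℝ => g (φ R + y * Complex.I)) (Icc 0 Real.pi) :=
      hg.comp (by fun_prop) (fun y hy => hmem _ _ hy)
    exact (this.mono Ioc_subset_Icc_self).aestronglyMeasurable measurableSet_Ioc
  · have h1 : ∀ᶠ v in comap Complex.re l ⊓ 𝓟 S, ‖g v‖ < ‖c‖ + 1 :=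
      hl.norm.eventually (gt_mem_nhds (by linarith))
    rw [eventually_inf_principal, eventually_comap] at h1
    filter_upwards [hφ.eventually h1] with R hR
    refine Eventually.of_forall fun y hy => ?_
    rw [uIoc_of_le hpi] at hy
    exact (hR _ (by simp) (hmem _ _ (Ioc_subset_Icc_self hy))).le
  · simp
  · refine Eventually.of_forall fun y hy => ?_
    rw [uIoc_of_le hpi] at hy
    apply hl.comp
    refine tendsto_inf.2 ⟨?_, ?_⟩
    · rw [tendsto_comap_iff]
      have : (Complex.re ∘ fun R : ℝ => (φ R : ℂ) + y * Complex.I) = φ := by funext R; simp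
      rwa [this]
    · exact tendsto_principal.2 (Eventually.of_forall fun R => hmem _ _ (Ioc_subset_Icc_self hy))

lemma contour {g : ℂ → ℂ} {cl cr : ℂ} (v0 : ℝ) (hg : ContinuousOn g S)
    (hd : DifferentiableOn ℂ g {v | 0 < v.im ∧ v.im < Real.pi})
    (hl : Tendsto g (comap Complex.re atBot ⊓ 𝓟 S) (𝓝 cl))
    (hr : Tendsto g (comap Complex.re atTop ⊓ 𝓟 S) (𝓝 cr))
    (hb : ∀ u : ℝ, u ≠ v0 → (g u).im = 0) :
    Tendsto (fun R : ℝ => ∫ u in (-R)..R, (g (u + Real.pi * Complex.I)).im) atTop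
      (𝓝 (Real.pi * (cr.re - cl.re))) := by
  have hpi := Real.pi_pos
  have s1 := side hg hl tendsto_neg_atTop_atBot
  have s2 := side hg hr tendsto_id
  have s3 := (Complex.continuous_re.tendsto _).comp (s2.sub s1)
  have e : ((Real.pi : ℂ) * cr - Real.pi * cl).re = Real.pi * (cr.re - cl.re) := by
    simp; ring
  rw [e] at s3
  refine s3.congr fun R => ?_
  have hc := Complex.integral_boundary_rect_eq_zero_of_continuousOn_of_differentiableOn g
    ⟨-R, 0⟩ ⟨R, Real.pi⟩ (hg.mono ?_) (hd.mono ?_)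
  · simp only at hc
    have hcont : ∀ y ∈ Icc 0 Real.pi, Continuous (fun u : ℝ => g (u + y * Complex.I)) := by
      intro y hy
      rw [← continuousOn_univ]
      exact hg.comp (by fun_prop) (fun u _ => by simpa [S] using hy)
    have im_int : ∀ y ∈ Icc 0 Real.pi, (∫ u in (-R)..R, g (u + y * Complex.I)).im =
        ∫ u in (-R)..R, (g (u + y * Complex.I)).im := by
      intro y hy
      have := Complex.imCLM.intervalIntegral_comp_comm
        ((hcont y hy).intervalIntegrable (μ := volume) (-R) R)
      simpa using this.symm
    have bot : (∫ u in (-R)..R, g (u + (0 : ℝ) * Complex.I)).im = 0 := by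
      rw [im_int 0 (left_mem_Icc.2 hpi.le)]
      apply intervalIntegral.integral_zero_ae
      have : ∀ᵐ u : ℝ, u ≠ v0 := by
        rw [ae_iff]; simp
      filter_upwards [this] with u hu _
      simpa using hb u hu
    have h := congrArg Complex.im hc
    simp only [Complex.add_im, Complex.sub_im, smul_eq_mul, Complex.I_mul_im, Complex.zero_im] at h
    rw [bot, im_int Real.pi (right_mem_Icc.2 hpi.le)] at h
    simp only [Function.comp, Complex.sub_re, id]
    linarith
  · intro v hv
    have := hv.2
    simp only [mem_preimage, uIcc_of_le hpi.le] at this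
    exact this
  · intro v hv
    have := hv.2
    simp only [mem_preimage, min_eq_left hpi.le, max_eq_right hpi.le] at this
    exact this

lemma exp_dslope_ne {v0 : ℝ} {v : ℂ} (hv : v ∈ S) : dslope Complex.exp (v0 : ℂ) v ≠ 0 := by
  by_cases h : v = v0
  · rw [h, dslope_same]
    simp
  · rw [dslope_of_ne _ h, slope_def_field]
    refine div_ne_zero ?_ (sub_ne_zero.2 h)
    rw [sub_ne_zero]
    intro he
    apply h
    apply Complex.exp_inj_of_neg_pi_lt_of_le_pi _ hv.2 _ _ he
    · linarith [hv.1, Real.pi_pos]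
    · simpa using Real.pi_pos
    · simpa using Real.pi_pos.le

lemma dslope_cont {f : ℂ → ℂ} {v0 : ℂ} (hf : ContinuousOn f S) (hd : DifferentiableAt ℂ f v0) :
    ContinuousOn (dslope f v0) S := by
  intro v hv
  by_cases h : v = v0
  · rw [h]; exact (continuousAt_dslope_same.2 hd).continuousWithinAt
  · exact (continuousWithinAt_dslope_of_ne h).2 (hf v hv)

lemma lim_pos {α s : ℝ} (h0 : 0 < α) (h1 : α < 1) (hs : 0 < s) {l : ℝ} (hl : 0 < l) :
    Tendsto (fun R : ℝ => ∫ u in (-R)..R, -(E α s (u + Real.pi * Complex.I)).im *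
      (Real.exp u / (Real.exp u + l))) atTop (𝓝 (Real.pi * ((1 + l) ^ α - l ^ α) ^ s)) := by
  obtain ⟨v0, rfl⟩ : ∃ v0, l = Real.exp v0 := ⟨Real.log l, (Real.exp_log hl).symm⟩
  set g : ℂ → ℂ := fun v => dslope (E α s) v0 v / dslope Complex.exp v0 v * Complex.exp v with hg
  have hpi := Real.pi_pos
  have hdE : DifferentiableAt ℂ (E α s) v0 := E_diff h0 h1 (by simp) (by simpa using hpi)
  have gne : ∀ v : ℂ, v ≠ v0 → g v =
      (E α s v - E α s v0) * (Complex.exp v / (Complex.exp v - Real.exp v0)) := by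
    intro v hv
    have : v - v0 ≠ 0 := sub_ne_zero.2 hv
    simp only [hg]
    rw [dslope_of_ne _ hv, dslope_of_ne _ hv, slope_def_field, slope_def_field,
      div_div_div_cancel_right₀ this]
    push_cast
    ring
  have hcont : ContinuousOn g S :=
    ((dslope_cont (E_cont h0 h1) hdE).div
      (dslope_cont Complex.continuous_exp.continuousOn Complex.differentiable_exp.differentiableAt)
      (fun v hv => exp_dslope_ne hv)).mul Complex.continuous_exp.continuousOn
  have hdiff : DifferentiableOn ℂ g {v | 0 < v.im ∧ v.im < Real.pi} := by
    intro v hv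
    have hne : v ≠ v0 := by rintro rfl; simp at hv
    apply DifferentiableAt.differentiableWithinAt
    refine DifferentiableAt.mul (DifferentiableAt.div ?_ ?_ (exp_dslope_ne ⟨hv.1.le, hv.2.le⟩)) ?_
    · exact (differentiableAt_dslope_of_ne hne).2 (E_diff h0 h1 hv.1.le hv.2)
    · exact (differentiableAt_dslope_of_ne hne).2 Complex.differentiable_exp.differentiableAt
    · fun_prop
  have nebot : ∀ᶠ v : ℂ in comap Complex.re atBot ⊓ 𝓟 S, v ≠ v0 := by
    refine mem_inf_of_left ?_
    filter_upwards [tendsto_comap.eventually (eventually_lt_atBot v0)] with v hv h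
    rw [h] at hv; simp at hv
  have netop : ∀ᶠ v : ℂ in comap Complex.re atTop ⊓ 𝓟 S, v ≠ v0 := by
    refine mem_inf_of_left ?_
    filter_upwards [tendsto_comap.eventually (eventually_gt_atTop v0)] with v hv h
    rw [h] at hv; simp at hv
  have hL : Tendsto g (comap Complex.re atBot ⊓ 𝓟 S) (𝓝 0) := by
    have hx : Tendsto Complex.exp (comap Complex.re atBot ⊓ 𝓟 S) (𝓝 0) :=
      Complex.tendsto_exp_comap_re_atBot.mono_left inf_le_left
    have hE : Tendsto (E α s) (comap Complex.re atBot ⊓ 𝓟 S) (𝓝 1) :=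
      (E_left h0).mono_left inf_le_left
    have := (hE.sub_const (E α s v0)).mul (hx.div (hx.sub_const ((Real.exp v0 : ℝ) : ℂ))
      (by rw [zero_sub, neg_ne_zero]; exact_mod_cast (Real.exp_pos v0).ne'))
    rw [zero_div, mul_zero] at this
    refine this.congr' ?_
    filter_upwards [nebot] with v hv
    exact (gne v hv).symm
  have hR : Tendsto g (comap Complex.re atTop ⊓ 𝓟 S) (𝓝 (-E α s v0)) := by
    have hneg : Tendsto (fun v : ℂ => -v) (comap Complex.re atTop) (comap Complex.re atBot) := by
      rw [tendsto_comap_iff]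
      exact tendsto_neg_atTop_atBot.comp tendsto_comap
    have hx : Tendsto (fun v : ℂ => Complex.exp (-v)) (comap Complex.re atTop ⊓ 𝓟 S) (𝓝 0) :=
      (Complex.tendsto_exp_comap_re_atBot.comp hneg).mono_left inf_le_left
    have := ((E_right h0 h1 hs).sub_const (E α s v0)).mul
      (((hx.mul_const ((Real.exp v0 : ℝ) : ℂ)).const_sub 1).inv₀ (by simp))
    simp only [zero_sub, zero_mul, sub_zero, inv_one, mul_one] at this
    refine this.congr' ?_
    filter_upwards [netop] with v hv
    rw [gne v hv]
    congr 1
    rw [Complex.exp_neg, inv_eq_one_div]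
    have := Complex.exp_ne_zero v
    field_simp
  have hbot : ∀ u : ℝ, u ≠ v0 → (g u).im = 0 := by
    intro u hu
    rw [gne u (by exact_mod_cast hu), E_real h0, E_real h0, ← Complex.ofReal_exp]
    norm_cast
  have key := (contour v0 hcont hdiff hL hR hbot).neg
  have e : -(Real.pi * ((-E α s v0).re - (0 : ℂ).re)) =
      Real.pi * ((1 + Real.exp v0) ^ α - Real.exp v0 ^ α) ^ s := by
    rw [E_real h0, Complex.neg_re, Complex.ofReal_re]; simp
  rw [e] at key
  refine key.congr fun R => ?_
  rw [← intervalIntegral.integral_neg]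
  congr 1
  funext u
  have hne : (u : ℂ) + Real.pi * Complex.I ≠ v0 := by
    intro h
    have := congrArg Complex.im h
    simp at this
  rw [gne _ hne, exp_pi, E_real h0]
  have e2 : (((-Real.exp u : ℝ) : ℂ) / (((-Real.exp u : ℝ) : ℂ) - ((Real.exp v0 : ℝ) : ℂ))) =
      ((Real.exp u / (Real.exp u + Real.exp v0) : ℝ) : ℂ) := by
    rw [← Complex.ofReal_sub, ← Complex.ofReal_div]
    congr 1
    rw [← neg_div_neg_eq]; congr 1 <;> ring
  rw [e2, Complex.im_mul_ofReal, Complex.sub_im, Complex.ofReal_im]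
  ring

lemma lim_zero {α s : ℝ} (h0 : 0 < α) (h1 : α < 1) (hs : 0 < s) :
    Tendsto (fun R : ℝ => ∫ u in (-R)..R, -(E α s (u + Real.pi * Complex.I)).im) atTop
      (𝓝 Real.pi) := by
  have key := (contour 0 (E_cont h0 h1 (s := s))
    (fun v hv => (E_diff h0 h1 hv.1.le hv.2).differentiableWithinAt)
    ((E_left h0).mono_left inf_le_left) (E_right h0 h1 hs)
    (fun u _ => by rw [E_real h0, Complex.ofReal_im])).neg
  simp only [Complex.zero_re, Complex.one_re, zero_sub, mul_neg, mul_one, neg_neg] at key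
  refine key.congr fun R => ?_
  rw [← intervalIntegral.integral_neg]

lemma lim_all {α s : ℝ} (h0 : 0 < α) (h1 : α < 1) (hs : 0 < s) {l : ℝ} (hl : 0 ≤ l) :
    Tendsto (fun R : ℝ => ∫ u in (-R)..R, -(E α s (u + Real.pi * Complex.I)).im *
      (Real.exp u / (Real.exp u + l))) atTop (𝓝 (Real.pi * ((1 + l) ^ α - l ^ α) ^ s)) := by
  rcases hl.eq_or_lt with h | h
  · subst h
    simpa [Real.zero_rpow h0.ne', div_self (Real.exp_pos _).ne'] using lim_zero h0 h1 hs
  · exact lim_pos h0 h1 hs h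

lemma dens_eq {α σ : ℝ} (h0 : 0 < α) (h1 : α < 1) (u : ℝ) :
    Real.exp (-u) * bfryMeanDensity α σ (Real.exp (-u)) =
      Real.pi⁻¹ * -(E α (σ / (1 - α)) (u + Real.pi * Complex.I)).im := by
  have hpi := Real.pi_pos
  have ha : 0 < 1 - α := by linarith
  set t := Real.exp u with ht
  have htp : 0 < t := Real.exp_pos u
  have hx : Real.exp (-u) = t⁻¹ := Real.exp_neg u
  rw [hx, E, Complex.cpow_ofReal_im, bfryMeanDensity]
  have hpow : t⁻¹ * t⁻¹ ^ (-(σ * α / (1 - α)) - 1) = (t ^ α) ^ (σ / (1 - α)) := by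
    have : 0 < t⁻¹ := by positivity
    rw [mul_comm, ← Real.rpow_add_one this.ne', ← Real.rpow_mul htp.le, Real.inv_rpow htp.le,
      ← Real.rpow_neg htp.le]
    congr 1
    field_simp
    ring
  split_ifs with h
  · have ht1 : 1 ≤ t := by
      rw [inv_le_one₀ htp] at h; exact h
    have hdiff : 0 < t ^ α - (t - 1) ^ α := by
      have := Real.rpow_lt_rpow (z := α) (show 0 ≤ t - 1 by linarith) (show t - 1 < t by linarith) h0
      linarith
    have hQ := Q_top_ge (α := α) ht1
    have harg : (Q α (u + Real.pi * Complex.I)).arg = -(Real.pi * (1 - α)) := by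
      rw [hQ]
      exact Complex.arg_mul_cos_add_sin_mul_I hdiff ⟨by nlinarith, by nlinarith⟩
    have hnorm : ‖Q α (u + Real.pi * Complex.I)‖ = t ^ α - (t - 1) ^ α := by
      rw [hQ, norm_mul, Complex.norm_cos_add_sin_mul_I, mul_one, Complex.norm_real,
        Real.norm_of_nonneg hdiff.le]
    rw [harg, hnorm]
    have e1 : -(Real.pi * (1 - α)) * (σ / (1 - α)) = -(Real.pi * σ) := by field_simp
    have e2 : t ^ α - (t - 1) ^ α = t ^ α * (1 - (1 - t⁻¹) ^ α) := by
      rw [mul_sub, mul_one, ← Real.mul_rpow htp.le (by linarith)]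
      congr 2
      field_simp
    have e3 : 0 ≤ 1 - (1 - t⁻¹) ^ α := by
      have := Real.rpow_le_one (x := 1 - t⁻¹) (z := α) (by linarith)
        (by linarith [inv_pos.2 htp]) h0.le
      linarith
    rw [e1, Real.sin_neg, e2, Real.mul_rpow (by positivity) e3, ← hpow]
    field_simp
  · have ht1 : t < 1 := by
      push Not at h
      rwa [one_lt_inv₀ htp] at h
    rw [Q_top_le ht1.le]
    have hF := cdf_eq h0 h1 htp.le ht1.le
    have e0 : (1 : ℝ) / t⁻¹ = t := by simp
    have e1 : (q α t).arg * (σ / (1 - α)) = -(Real.pi * σ * bfryCDF α t) := by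
      rw [hF]; field_simp
    have e2 : ‖q α t‖ ^ (σ / (1 - α)) = (t ^ α) ^ (σ / (1 - α)) *
        ((t⁻¹ - 1) ^ (2 * α) - 2 * (t⁻¹ - 1) ^ α * Real.cos (Real.pi * α) + 1) ^
          (σ / (2 * (1 - α))) := by
      have hB : 0 ≤ t⁻¹ - 1 := by push Not at h; linarith
      set D := (t⁻¹ - 1) ^ (2 * α) - 2 * (t⁻¹ - 1) ^ α * Real.cos (Real.pi * α) + 1 with hD
      have f1 : 1 - t = t * (t⁻¹ - 1) := by field_simp
      have f2 : ‖q α t‖ ^ 2 = (t ^ α) ^ 2 * D := by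
        rw [← Complex.normSq_eq_norm_sq, normSq_q htp.le ht1.le, f1, Real.mul_rpow htp.le hB,
          Real.mul_rpow htp.le hB]
        have : t ^ (2 * α) = (t ^ α) ^ 2 := by
          rw [← Real.rpow_natCast, ← Real.rpow_mul htp.le]; ring_nf
        rw [this, hD]; ring
      have f3 : 0 ≤ D := by
        have p : 0 < (t ^ α) ^ 2 := by positivity
        by_contra! hc
        nlinarith [sq_nonneg ‖q α t‖]
      have f4 : ∀ a : ℝ, 0 ≤ a → a ^ (σ / (1 - α)) = (a ^ 2) ^ (σ / (2 * (1 - α))) := by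
        intro a ha'
        rw [← Real.rpow_natCast, ← Real.rpow_mul ha']
        congr 1
        push_cast
        field_simp
      rw [f4 _ (norm_nonneg _), f4 (t ^ α) (by positivity), f2, Real.mul_rpow (by positivity) f3]
    rw [e0, e1, e2, Real.sin_neg, ← hpow]
    field_simp

lemma main_int (α σ : ℝ) (hα0 : 0 < α) (hα1 : α < 1) (hσ0 : 0 < σ) (hσ1 : σ ≤ 1) (l : ℝ)
    (hl : 0 ≤ l) : ∫ x in Set.Ioi (0:ℝ), bfryMeanDensity α σ x * (1 + l * x)⁻¹
        = ((1 + l) ^ α - l ^ α) ^ (σ / (1 - α)) := by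
  have hpi := Real.pi_pos
  have hs : 0 < σ / (1 - α) := div_pos hσ0 (by linarith)
  have himg : (fun u : ℝ => Real.exp (-u)) '' univ = Ioi 0 := by
    ext x
    simp only [image_univ, mem_range, mem_Ioi]
    constructor
    · rintro ⟨u, rfl⟩; exact Real.exp_pos _
    · intro hx; exact ⟨-Real.log x, by rw [neg_neg, Real.exp_log hx]⟩
  have hder : ∀ u ∈ (univ : Set ℝ), HasDerivWithinAt (fun u : ℝ => Real.exp (-u))
      (-Real.exp (-u)) univ u := by
    intro u _
    have := ((hasDerivAt_id u).neg).exp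
    simpa using this
  have hinj : InjOn (fun u : ℝ => Real.exp (-u)) univ := by
    intro a _ b _ h
    simpa using h
  rw [← himg, integral_image_eq_integral_abs_deriv_smul MeasurableSet.univ hder hinj,
    Measure.restrict_univ]
  set k : ℝ → ℝ := fun u => -(E α (σ / (1 - α)) (u + Real.pi * Complex.I)).im *
      (Real.exp u / (Real.exp u + l)) with hk
  have heq : ∀ u : ℝ, |-Real.exp (-u)| • (bfryMeanDensity α σ (Real.exp (-u)) *
      (1 + l * Real.exp (-u))⁻¹) = Real.pi⁻¹ * k u := by
    intro u
    rw [abs_neg, abs_of_pos (Real.exp_pos _), smul_eq_mul, ← mul_assoc, dens_eq hα0 hα1, hk,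
      mul_assoc]
    congr 2
    rw [Real.exp_neg]
    have := Real.exp_pos u
    field_simp
  simp_rw [heq]
  rw [integral_const_mul]
  have hknn : ∀ u, 0 ≤ k u := by
    intro u
    have h1 := dens_nonneg α σ hα0 hα1 hσ0 hσ1 _ (Real.exp_pos (-u))
    have h2 := dens_eq (σ := σ) hα0 hα1 u
    have h3 : 0 ≤ Real.pi⁻¹ * -(E α (σ / (1 - α)) (u + Real.pi * Complex.I)).im := by
      rw [← h2]; positivity
    have h4 := nonneg_of_mul_nonneg_right h3 (by positivity : 0 < Real.pi⁻¹)
    have := Real.exp_pos u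
    exact mul_nonneg h4 (by positivity)
  have hkc : Continuous k := by
    apply Continuous.mul
    · apply Continuous.neg
      apply Complex.continuous_im.comp
      rw [← continuousOn_univ]
      exact (E_cont hα0 hα1).comp (by fun_prop) (fun u _ => by simp [S, hpi.le])
    · exact Real.continuous_exp.div (by fun_prop) (fun u => by have := Real.exp_pos u; positivity)
  have hlim := lim_all hα0 hα1 hs hl
  have hint : Integrable k := by
    refine integrable_of_intervalIntegral_norm_tendsto _ (fun R : ℝ => ?_)
      tendsto_neg_atTop_atBot tendsto_id (hlim.congr fun R => ?_)
    · exact hkc.locallyIntegrable.integrableOn_isCompact isCompact_Icc |>.mono_set Ioc_subset_Icc_self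
    · congr 1
      funext u
      exact (Real.norm_of_nonneg (hknn u)).symm
  have := intervalIntegral_tendsto_integral hint tendsto_neg_atTop_atBot tendsto_id
  rw [tendsto_nhds_unique this hlim]
  field_simp

end BFRY

/-- Proposition 5.2: `f_{α,σ}` is a probability density on `(0,∞)`
and for every `λ ≥ 0`, `∫₀^∞ f_{α,σ}(x)·(1+λx)^{−1} dx = ((1+λ)^α − λ^α)^{σ/(1−α)}`. -/
theorem bfry_mean_density
    (α σ : ℝ) (hα0 : 0 < α) (hα1 : α < 1) (hσ0 : 0 < σ) (hσ1 : σ ≤ 1) :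
    (∀ x ∈ Set.Ioi (0:ℝ), 0 ≤ bfryMeanDensity α σ x) ∧
    (∫ x in Set.Ioi (0:ℝ), bfryMeanDensity α σ x = 1) ∧
    (∀ l : ℝ, 0 ≤ l →
      ∫ x in Set.Ioi (0:ℝ), bfryMeanDensity α σ x * (1 + l * x)⁻¹
        = ((1 + l) ^ α - l ^ α) ^ (σ / (1 - α))) := by
  have h3 := BFRY.main_int α σ hα0 hα1 hσ0 hσ1
  refine ⟨BFRY.dens_nonneg α σ hα0 hα1 hσ0 hσ1, ?_, h3⟩
  simpa [Real.zero_rpow hα0.ne'] using h3 0 le_rfl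
end

section
/- Let 0 < α < 1 and 0 < σ ≤ 1, and let f_{α,σ} be defined as follows: with f_𝔾(u) = (α·sin(πα)/((1−α)π))·u^{α−1}(1−u)^{α−1}/(u^{2α} − 2u^α(1−u)^α cos(πα) + (1−u)^{2α}) on (0,1) and F_𝔾(y) = ∫₀^y f_𝔾(u) du, set f_{α,σ}(x) = (x^{−σα/(1−α)−1}/π)·sin(πσ)·(1 − (1−x)^α)^{σ/(1−α)} for 0 < x ≤ 1, and f_{α,σ}(x) = (x^{−σα/(1−α)−1}/π)·sin(πσ·F_𝔾(1/x))·((x−1)^{2α} − 2(x−1)^α cos(πα) + 1)^{σ/(2(1−α))} for x > 1. Then the function g_{α,σ}(x) = ∫₀^∞ e^{−x/w}·w^{−1}·f_{α,σ}(w) dw is a probability density on (0,∞), and for every λ ≥ 0, ∫₀^∞ e^{−λx}·g_{α,σ}(x) dx = ((1+λ)^α − λ^α)^{σ/(1−α)}. (Theorem 5.1: g_{α,σ} is the density of the increment Σ_α(C) of the Bertoin–Fujita–Roynette–Yor subordinator over a set C with σ = (1−α)|C|, i.e., Σ_α(C) has the law of G₁·M₁(F_{Y_σ/𝔾_α}).)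 -/
open MeasureTheory

/-- The density `g_{α,σ}(x) = ∫₀^∞ e^{−x/w} w^{−1} f_{α,σ}(w) dw` of the increment
`Σ_α(C)` of the BFRY subordinator, with `σ = (1−α)|C|` (Theorem 5.1). -/
noncomputable def bfryIncrementDensity (α σ : ℝ) : ℝ → ℝ := fun x =>
  ∫ w in Set.Ioi (0:ℝ), Real.exp (-x / w) * w⁻¹ * bfryMeanDensity α σ w

open Set Filter Topology

/-- The function `(1+z)^α - z^α`. -/
noncomputable def cA (α : ℝ) (z : ℂ) : ℂ := (1 + z) ^ (α : ℂ) - z ^ (α : ℂ)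

/-- The function `((1+z)^α - z^α)^θ`. -/
noncomputable def cP (α θ : ℝ) (z : ℂ) : ℂ := cA α z ^ (θ : ℂ)

lemma cpow_contOn (α : ℝ) (h0 : 0 < α) :
    ContinuousOn (fun z : ℂ => z ^ (α : ℂ)) {z : ℂ | 0 ≤ z.im} := by
  intro z hz
  by_cases h : 0 ≤ z.re ∨ z.im ≠ 0
  · exact (Complex.continuousAt_cpow_const_of_re_pos h (by simpa using h0)).continuousWithinAt
  · push Not at h
    obtain ⟨h1, h2⟩ := h
    have hl := Complex.continuousWithinAt_log_of_re_neg_of_im_zero h1 h2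
    have hz0 : z ≠ 0 := by
      rintro rfl
      simp at h1
    have hc : ContinuousWithinAt (fun w : ℂ => Complex.exp (Complex.log w * α)) {z : ℂ | 0 ≤ z.im} z :=
      (hl.mul continuousWithinAt_const).cexp
    refine hc.congr_of_eventuallyEq ?_ (Complex.cpow_def_of_ne_zero hz0 _)
    have : ∀ᶠ w in 𝓝 z, w ≠ 0 := isOpen_ne.mem_nhds hz0
    filter_upwards [nhdsWithin_le_nhds this] with w hw
    exact Complex.cpow_def_of_ne_zero hw _

lemma cA_contOn (α : ℝ) (h0 : 0 < α) : ContinuousOn (cA α) {z : ℂ | 0 ≤ z.im} := by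
  unfold cA
  refine ContinuousOn.sub ?_ (cpow_contOn α h0)
  exact (cpow_contOn α h0).comp (f := fun z : ℂ => 1 + z) (by fun_prop) (fun z hz => by simpa using hz)

lemma cA_hasDeriv_path (α : ℝ) (z : ℂ) (hz : 0 < z.im) (s : ℝ) :
    HasDerivAt (fun s : ℝ => (z + s) ^ (α : ℂ)) (α * (z + s) ^ ((α : ℂ) - 1)) s := by
  have h1 : HasDerivAt (fun s : ℝ => z + (s : ℂ)) 1 s := by
    simpa using (Complex.ofRealCLM.hasDerivAt (x := s)).const_add z
  have h2 : (z + s) ∈ Complex.slitPlane := Or.inr (by simpa using hz.ne')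
  have h3 := (Complex.hasStrictDerivAt_cpow_const (c := (α : ℂ)) h2).hasDerivAt
  have h4 := HasDerivAt.comp (h := fun s : ℝ => z + (s : ℂ)) s h3 h1
  rw [mul_one] at h4
  exact h4

lemma cA_im_neg (α : ℝ) (h0 : 0 < α) (h1 : α < 1) (z : ℂ) (hz : 0 < z.im) : (cA α z).im < 0 := by
  have hd : ∀ s : ℝ, HasDerivAt (fun s : ℝ => ((z + s) ^ (α : ℂ)).im)
      ((α * (z + s) ^ ((α : ℂ) - 1)).im) s := fun s => by
    exact Complex.imCLM.hasFDerivAt.comp_hasDerivAt s (cA_hasDeriv_path α z hz s)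
  have hneg : ∀ s : ℝ, ((α * (z + s) ^ ((α : ℂ) - 1)).im) < 0 := by
    intro s
    have hw : 0 < (z + s).im := by simpa using hz
    have e : ((α : ℂ) - 1) = ((α - 1 : ℝ) : ℂ) := by push_cast; ring
    have hw0 : z + s ≠ 0 := by
      intro h
      rw [h] at hw
      simp at hw
    have harg : 0 < (z + s).arg := by
      by_contra hc
      push Not at hc
      have := Complex.norm_mul_sin_arg (z + s)
      have h3 := Real.sin_nonpos_of_nonpos_of_neg_pi_le hc (Complex.neg_pi_lt_arg _).le
      have h4 := norm_nonneg (z + s)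
      nlinarith
    have hpi := Complex.arg_le_pi (z + s)
    rw [e, Complex.im_ofReal_mul, Complex.cpow_ofReal_im]
    have h5 : Real.sin ((z + s).arg * (α - 1)) < 0 :=
      Real.sin_neg_of_neg_of_neg_pi_lt (by nlinarith) (by nlinarith [Real.pi_pos])
    have h6 : 0 < ‖z + s‖ ^ (α - 1) := Real.rpow_pos_of_pos (norm_pos_iff.2 hw0) _
    have := mul_neg_of_pos_of_neg h6 h5
    nlinarith
  have hanti : StrictAnti (fun s : ℝ => ((z + s) ^ (α : ℂ)).im) := by
    apply strictAnti_of_deriv_neg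
    intro s
    rw [(hd s).deriv]
    exact hneg s
  have := hanti (zero_lt_one' ℝ)
  simp only [Complex.ofReal_one, Complex.ofReal_zero, add_zero] at this
  rw [cA, Complex.sub_im, add_comm 1 z]
  linarith

lemma cA_norm (α : ℝ) (h0 : 0 < α) (h1 : α < 1) (z : ℂ) (hz : 0 < z.im) (R : ℝ) (hR : 1 < R)
    (hzR : R ≤ ‖z‖) : ‖cA α z‖ ≤ (R - 1) ^ (α - 1) := by
  have := norm_image_sub_le_of_norm_deriv_le_segment_01' (C := (R - 1) ^ (α - 1))
    (fun s _ => (cA_hasDeriv_path α z hz s).hasDerivWithinAt) (fun s hs => by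
      have e : ((α : ℂ) - 1) = ((α - 1 : ℝ) : ℂ) := by push_cast; ring
      rw [e, norm_mul, Complex.norm_cpow_real, Complex.norm_real, Real.norm_of_nonneg h0.le]
      have h3 : R - 1 ≤ ‖z + s‖ := by
        have h4 := norm_sub_le (z + s) (s : ℂ)
        simp only [add_sub_cancel_right, Complex.norm_real, Real.norm_of_nonneg hs.1] at h4
        linarith [hs.2]
      have h5 : ‖z + s‖ ^ (α - 1) ≤ (R - 1) ^ (α - 1) :=
        Real.rpow_le_rpow_of_nonpos (by linarith) h3 (by linarith)
      have : 0 ≤ ‖z + s‖ ^ (α - 1) := by positivity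
      nlinarith)
  simpa [cA, add_comm] using this

lemma cA_pos (α : ℝ) (x : ℝ) (hx : 0 ≤ x) :
    cA α x = (((1 + x) ^ α - x ^ α : ℝ) : ℂ) := by
  rw [cA]
  push_cast
  rw [Complex.ofReal_cpow (by linarith), Complex.ofReal_cpow hx]
  push_cast; rfl

lemma cA_real_pos (α : ℝ) (h0 : 0 < α) (x : ℝ) (hx : 0 ≤ x) : 0 < (1 + x) ^ α - x ^ α := by
  have := Real.rpow_lt_rpow hx (by linarith : x < 1 + x) h0
  linarith

lemma cpow_neg_real (α y : ℝ) (hy : 0 ≤ y) :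
    (-(y : ℂ)) ^ (α : ℂ) = (y ^ α : ℝ) * Complex.exp ((Real.pi * α : ℝ) * Complex.I) := by
  have := Complex.ofReal_cpow_of_nonpos (x := -y) (by linarith) (α : ℂ)
  push_cast at this
  rw [this, neg_neg, Complex.ofReal_cpow hy]
  congr 2
  push_cast; ring

lemma cA_neg1 (α y : ℝ) (hy : 0 ≤ y) (hy1 : y ≤ 1) :
    cA α (-y) = (((1 - y) ^ α : ℝ) : ℂ) - (y ^ α : ℝ) * Complex.exp ((Real.pi * α : ℝ) * Complex.I) := by
  rw [cA, cpow_neg_real α y hy, Complex.ofReal_cpow (by linarith : 0 ≤ 1 - y)]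
  push_cast; rfl

lemma cA_neg2 (α y : ℝ) (hy1 : 1 ≤ y) :
    cA α (-y) = -((y ^ α - (y - 1) ^ α : ℝ) * Complex.exp ((Real.pi * α : ℝ) * Complex.I)) := by
  have h : (1 + -(y : ℂ)) = -((y - 1 : ℝ) : ℂ) := by push_cast; ring
  rw [cA, h, cpow_neg_real α y (by linarith), cpow_neg_real α (y - 1) (by linarith)]
  push_cast; ring

lemma sin_pos' (α : ℝ) (h0 : 0 < α) (h1 : α < 1) : 0 < Real.sin (Real.pi * α) :=
  Real.sin_pos_of_pos_of_lt_pi (by positivity) (by nlinarith [Real.pi_pos])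

lemma cA_im_neg_real (α y : ℝ) (h0 : 0 < α) (h1 : α < 1) (hy : 0 < y) : (cA α (-y)).im < 0 := by
  have hs := sin_pos' α h0 h1
  rcases le_total y 1 with h | h
  · rw [cA_neg1 α y hy.le h]
    simp only [Complex.sub_im, Complex.ofReal_im, Complex.im_ofReal_mul, Complex.exp_ofReal_mul_I_im]
    have : 0 < y ^ α := by positivity
    nlinarith
  · rw [cA_neg2 α y h]
    simp only [Complex.neg_im, Complex.im_ofReal_mul, Complex.exp_ofReal_mul_I_im]
    have : (y - 1) ^ α < y ^ α := Real.rpow_lt_rpow (by linarith) (by linarith) h0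
    nlinarith

lemma cA_slit (α : ℝ) (h0 : 0 < α) (h1 : α < 1) (z : ℂ) (hz : 0 ≤ z.im) :
    cA α z ∈ Complex.slitPlane := by
  rcases hz.lt_or_eq with h | h
  · exact Or.inr (cA_im_neg α h0 h1 z h).ne
  · have hzr : z = (z.re : ℂ) := Complex.ext rfl (by simp [h.symm])
    rcases le_or_gt 0 z.re with h2 | h2
    · rw [hzr, cA_pos α _ h2]
      exact Complex.ofReal_mem_slitPlane.2 (cA_real_pos α h0 _ h2)
    · right
      have := cA_im_neg_real α (-z.re) h0 h1 (by linarith)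
      rw [hzr]
      simpa using this.ne

lemma cP_contOn (α θ : ℝ) (h0 : 0 < α) (h1 : α < 1) :
    ContinuousOn (cP α θ) {z : ℂ | 0 ≤ z.im} := by
  unfold cP
  exact (cA_contOn α h0).cpow_const (fun z hz => cA_slit α h0 h1 z hz)

lemma cP_diff (α θ : ℝ) (h0 : 0 < α) (h1 : α < 1) (z : ℂ) (hz : z ∈ Complex.slitPlane)
    (hz' : 0 ≤ z.im) : DifferentiableAt ℂ (cP α θ) z := by
  have h1z : 1 + z ∈ Complex.slitPlane := by
    rcases hz with h | h
    · left; simp; linarith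
    · right; simpa using h
  unfold cP
  refine DifferentiableAt.cpow_const ?_ (cA_slit α h0 h1 z hz')
  unfold cA
  exact ((differentiableAt_id.const_add 1).cpow_const h1z).sub (differentiableAt_id.cpow_const hz)

lemma cP_pos (α θ : ℝ) (h0 : 0 < α) (x : ℝ) (hx : 0 ≤ x) :
    cP α θ x = ((((1 + x) ^ α - x ^ α) ^ θ : ℝ) : ℂ) := by
  rw [cP, cA_pos α x hx, ← Complex.ofReal_cpow (cA_real_pos α h0 x hx).le]

lemma cP_norm (α θ : ℝ) (h0 : 0 < α) (h1 : α < 1) (hθ : 0 < θ) (z : ℂ) (hz : 0 < z.im)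
    (R : ℝ) (hR : 1 < R) (hzR : R ≤ ‖z‖) : ‖cP α θ z‖ ≤ ((R - 1) ^ (α - 1)) ^ θ := by
  rw [cP, Complex.norm_cpow_real]
  exact Real.rpow_le_rpow (norm_nonneg _) (cA_norm α h0 h1 z hz R hR hzR) hθ.le

/-- the boundary density -/
noncomputable def hB (α θ : ℝ) (y : ℝ) : ℝ := -(cP α θ (-y)).im / Real.pi

lemma hB_cont (α θ : ℝ) (h0 : 0 < α) (h1 : α < 1) : Continuous (hB α θ) := by
  unfold hB
  have : Continuous (fun y : ℝ => cP α θ (-y)) := by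
    apply (cP_contOn α θ h0 h1).comp_continuous (by fun_prop)
    intro y; simp
  have := Complex.continuous_im.comp this
  exact (this.neg).div_const _

/-- The integral over three sides of the rectangle. -/
noncomputable def tI (R : ℝ) (q : ℂ → ℂ) : ℂ :=
  -(∫ x in (-R)..R, q (x + R * Complex.I)) + Complex.I * (∫ y in (0:ℝ)..R, q (R + y * Complex.I))
    - Complex.I * (∫ y in (0:ℝ)..R, q (-R + y * Complex.I))

lemma tI_sub (R : ℝ) (q r : ℂ → ℂ)
    (hR : 0 < R) (s : Set ℂ) (hs : ∀ z : ℂ, 0 ≤ z.im → (z.re = R ∨ z.re = -R ∨ z.im = R) → z ∈ s)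
    (hq : ContinuousOn q s) (hr : ContinuousOn r s) :
    tI R (fun z => q z - r z) = tI R q - tI R r := by
  have a1 : ∀ f : ℂ → ℂ, ContinuousOn f s →
      IntervalIntegrable (fun x : ℝ => f (x + R * Complex.I)) volume (-R) R := fun f hf =>
    ContinuousOn.intervalIntegrable (hf.comp (by fun_prop) (fun x _ => hs _ (by simp [hR.le]) (by simp)))
  have a2 : ∀ f : ℂ → ℂ, ContinuousOn f s →
      IntervalIntegrable (fun y : ℝ => f (R + y * Complex.I)) volume 0 R := fun f hf =>
    ContinuousOn.intervalIntegrable (hf.comp (by fun_prop) (fun y hy => by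
      rw [uIcc_of_le hR.le] at hy
      exact hs _ (by simp [hy.1]) (by simp)))
  have a3 : ∀ f : ℂ → ℂ, ContinuousOn f s →
      IntervalIntegrable (fun y : ℝ => f (-R + y * Complex.I)) volume 0 R := fun f hf =>
    ContinuousOn.intervalIntegrable (hf.comp (by fun_prop) (fun y hy => by
      rw [uIcc_of_le hR.le] at hy
      exact hs _ (by simp [hy.1]) (by simp)))
  unfold tI
  rw [intervalIntegral.integral_sub (a1 q hq) (a1 r hr), intervalIntegral.integral_sub (a2 q hq) (a2 r hr),
    intervalIntegral.integral_sub (a3 q hq) (a3 r hr)]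
  ring

lemma tI_congr (R : ℝ) (q r : ℂ → ℂ) (hR : 0 < R)
    (h : ∀ z : ℂ, 0 ≤ z.im → (z.re = R ∨ z.re = -R ∨ z.im = R) → q z = r z) : tI R q = tI R r := by
  unfold tI
  congr 1
  · congr 1
    · congr 1
      exact intervalIntegral.integral_congr (fun x _ => h _ (by simp [hR.le]) (by simp))
    · congr 1
      refine intervalIntegral.integral_congr (fun y hy => h _ ?_ (by simp))
      rw [uIcc_of_le hR.le] at hy
      simp [hy.1]
  · congr 1
    refine intervalIntegral.integral_congr (fun y hy => h _ ?_ (by simp))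
    rw [uIcc_of_le hR.le] at hy
    simp [hy.1]

lemma tI_norm (R C : ℝ) (q : ℂ → ℂ) (hR : 0 < R)
    (h : ∀ z : ℂ, 0 < z.im → (z.re = R ∨ z.re = -R ∨ z.im = R) → ‖q z‖ ≤ C) :
    ‖tI R q‖ ≤ 4 * R * C := by
  have b1 : ‖∫ x in (-R)..R, q (x + R * Complex.I)‖ ≤ C * |R - (-R)| :=
    intervalIntegral.norm_integral_le_of_norm_le_const (fun x _ => h _ (by simp [hR]) (by simp))
  have b2 : ‖∫ y in (0:ℝ)..R, q (R + y * Complex.I)‖ ≤ C * |R - 0| :=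
    intervalIntegral.norm_integral_le_of_norm_le_const (fun y hy => by
      rw [uIoc_of_le hR.le] at hy
      exact h _ (by simp [hy.1]) (by simp))
  have b3 : ‖∫ y in (0:ℝ)..R, q (-R + y * Complex.I)‖ ≤ C * |R - 0| :=
    intervalIntegral.norm_integral_le_of_norm_le_const (fun y hy => by
      rw [uIoc_of_le hR.le] at hy
      exact h _ (by simp [hy.1]) (by simp))
  rw [abs_of_pos (by linarith)] at b1 b2 b3
  unfold tI
  refine (norm_sub_le _ _).trans ?_
  have := norm_add_le (-(∫ x in (-R)..R, q (x + R * Complex.I)))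
    (Complex.I * (∫ y in (0:ℝ)..R, q (R + y * Complex.I)))
  simp only [norm_neg, norm_mul, Complex.norm_I, one_mul] at this ⊢
  linarith

lemma tI_inv (R l : ℝ) (c : ℝ) (hl : 0 < l) (hR : l < R) :
    (tI R (fun z => (c : ℂ) / (z - l))).im = c * Real.pi := by
  set L : ℂ → ℂ := fun z => c * Complex.log (-Complex.I * (z - l)) with hL
  have hd : ∀ z : ℂ, 0 ≤ z.im → (z.re = R ∨ z.re = -R ∨ z.im = R) →
      z - l ≠ 0 ∧ HasDerivAt L (c / (z - l)) z := by
    intro z hz h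
    have hne : z - l ≠ 0 := by
      intro h0
      have e : z = l := by linear_combination h0
      rw [e] at h
      simp at h
      rcases h with h | h | h <;> linarith
    refine ⟨hne, ?_⟩
    have hs : -Complex.I * (z - l) ∈ Complex.slitPlane := by
      rcases hz.lt_or_eq with h2 | h2
      · left; simpa using h2
      · right
        simp
        intro h3
        rcases h with h | h | h <;> linarith
    have h1 : HasDerivAt (fun z : ℂ => -Complex.I * (z - l)) (-Complex.I) z := by
      simpa using ((hasDerivAt_id z).sub_const (l : ℂ)).const_mul (-Complex.I)
    have h2 := (h1.clog hs).const_mul (c : ℂ)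
    have hI : -Complex.I ≠ 0 := neg_ne_zero.2 Complex.I_ne_zero
    rw [div_mul_cancel_left₀ hI, ← div_eq_mul_inv] at h2
    exact h2
  have hR0 : 0 < R := by linarith
  have hcont : ContinuousOn (fun z : ℂ => (c : ℂ) / (z - l)) {z : ℂ | z - l ≠ 0} :=
    ContinuousOn.div continuousOn_const (by fun_prop) (fun z hz => hz)
  have i1 : ∫ x in (-R)..R, (c : ℂ) / ((x + R * Complex.I) - l) = L (R + R * Complex.I) - L (-R + R * Complex.I) := by
    have := intervalIntegral.integral_eq_sub_of_hasDerivAt (a := -R) (b := R)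
      (f := fun x : ℝ => L (x + R * Complex.I)) (f' := fun x : ℝ => (c : ℂ) / ((x + R * Complex.I) - l))
      (fun x _ => by
        have h1 : HasDerivAt (fun x : ℝ => (x : ℂ) + R * Complex.I) 1 x := by
          simpa using (Complex.ofRealCLM.hasDerivAt (x := x)).add_const (R * Complex.I)
        have h4 := HasDerivAt.comp (h := fun x : ℝ => (x : ℂ) + R * Complex.I) x
          (hd (x + R * Complex.I) (by simp [hR0.le]) (by simp)).2 h1
        rw [mul_one] at h4
        exact h4)
      (ContinuousOn.intervalIntegrable (hcont.comp (by fun_prop)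
        (fun x _ => (hd (x + R * Complex.I) (by simp [hR0.le]) (by simp)).1)))
    rw [this]; push_cast; rfl
  have i2 : ∀ r : ℝ, (r = R ∨ r = -R) → Complex.I * ∫ y in (0:ℝ)..R, (c : ℂ) / ((r + y * Complex.I) - l)
      = L (r + R * Complex.I) - L r := by
    intro r hr
    have := intervalIntegral.integral_eq_sub_of_hasDerivAt (a := 0) (b := R)
      (f := fun y : ℝ => L (r + y * Complex.I)) (f' := fun y : ℝ => (c : ℂ) / ((r + y * Complex.I) - l) * Complex.I)
      (fun y hy => by
        rw [uIcc_of_le hR0.le] at hy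
        have h1 : HasDerivAt (fun y : ℝ => (r : ℂ) + y * Complex.I) Complex.I y := by
          simpa using ((Complex.ofRealCLM.hasDerivAt (x := y)).mul_const Complex.I).const_add (r : ℂ)
        exact HasDerivAt.comp (h := fun y : ℝ => (r : ℂ) + y * Complex.I) y
          (hd (r + y * Complex.I) (by simp [hy.1]) (by simp; tauto)).2 h1)
      (ContinuousOn.intervalIntegrable (ContinuousOn.mul (hcont.comp (by fun_prop)
        (fun y hy => by
          rw [uIcc_of_le hR0.le] at hy
          exact (hd (r + y * Complex.I) (by simp [hy.1]) (by simp; tauto)).1)) continuousOn_const))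
    rw [intervalIntegral.integral_mul_const] at this
    rw [mul_comm, this]; simp
  have i2a := i2 R (Or.inl rfl)
  have i2b := i2 (-R) (Or.inr rfl)
  push_cast at i2b
  unfold tI
  rw [i1, i2a, i2b]
  have e1 : L R = c * Complex.log (((R - l : ℝ) : ℂ) * (-Complex.I)) := by
    simp only [hL]; congr 2; push_cast; ring
  have e2 : L (-R) = c * Complex.log (((R + l : ℝ) : ℂ) * Complex.I) := by
    simp only [hL]; congr 2; push_cast; ring
  have e3 : -(L (R + R * Complex.I) - L (-R + R * Complex.I)) + (L (R + R * Complex.I) - L R)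
      - (L (-R + R * Complex.I) - L (-R)) = L (-R) - L R := by ring
  rw [e3, e1, e2, Complex.sub_im, Complex.im_ofReal_mul, Complex.im_ofReal_mul, Complex.log_im, Complex.log_im,
    Complex.arg_real_mul _ (by linarith), Complex.arg_real_mul _ (by linarith), Complex.arg_I, Complex.arg_neg_I]
  ring

lemma cauchy_step (α θ l R : ℝ) (h0 : 0 < α) (h1 : α < 1) (hθ : 0 < θ) (hl : 0 < l) (hR : l < R)
    (hR1 : 1 < R) :
    |(∫ y in (0:ℝ)..R, hB α θ y / (y + l)) - ((1 + l) ^ α - l ^ α) ^ θ|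
      ≤ 4 * R * (((R - 1) ^ (α - 1)) ^ θ / (R - l)) / Real.pi := by
  have hR0 : 0 < R := by linarith
  set c : ℝ := ((1 + l) ^ α - l ^ α) ^ θ with hc
  have hcl : cP α θ l = c := cP_pos α θ h0 l hl.le
  set H : ℂ → ℂ := dslope (cP α θ) l with hH
  have hlS : (l : ℂ) ∈ Complex.slitPlane := Complex.ofReal_mem_slitPlane.2 hl
  have hHc : ContinuousOn H {z : ℂ | 0 ≤ z.im} := by
    intro z hz
    by_cases h : z = l
    · rw [h]
      exact (continuousAt_dslope_same.2 (cP_diff α θ h0 h1 l hlS (by simp))).continuousWithinAt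
    · exact (continuousWithinAt_dslope_of_ne h).2 (cP_contOn α θ h0 h1 z hz)
  have hHd : DifferentiableOn ℂ H {z : ℂ | 0 < z.im} := by
    intro z hz
    have h : z ≠ l := by
      rintro rfl
      simp at hz
    exact ((differentiableAt_dslope_of_ne h).2
      (cP_diff α θ h0 h1 z (Or.inr (ne_of_gt hz)) (le_of_lt hz))).differentiableWithinAt
  have hrect := Complex.integral_boundary_rect_eq_zero_of_continuousOn_of_differentiableOn H
    (-R : ℝ) (R + R * Complex.I) (hHc.mono (by
      intro z hz
      have := (Complex.mem_reProdIm.1 hz).2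
      simp [uIcc_of_le hR0.le] at this
      exact this.1)) (hHd.mono (by
      intro z hz
      have := (Complex.mem_reProdIm.1 hz).2
      simp [hR0.le] at this
      exact this.1))
  have hrect2 : (∫ x in (-R)..R, H x) + tI R H = 0 := by
    have q1 : ((-R : ℝ) : ℂ).re = -R := Complex.ofReal_re _
    have q2 : ((-R : ℝ) : ℂ).im = 0 := Complex.ofReal_im _
    have q3 : ((R : ℂ) + R * Complex.I).re = R := by simp
    have q4 : ((R : ℂ) + R * Complex.I).im = R := by simp
    rw [q1, q2, q3, q4] at hrect
    simp only [Complex.ofReal_zero, zero_mul, add_zero, smul_eq_mul, Complex.ofReal_neg] at hrect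
    rw [← hrect, tI]
    ring
  have hside : ∀ z : ℂ, 0 ≤ z.im → (z.re = R ∨ z.re = -R ∨ z.im = R) → z ≠ l := by
    rintro z hz h rfl
    simp at h
    rcases h with h | h | h <;> linarith
  have hval : ∀ z : ℂ, z ≠ l → H z = cP α θ z / (z - l) - c / (z - l) := by
    intro z hz
    rw [hH, dslope_of_ne _ hz, slope_def_field, hcl, sub_div]
  have htI : tI R H = tI R (fun z => cP α θ z / (z - l)) - tI R (fun z => c / (z - l)) := by
    rw [← tI_sub R (fun z => cP α θ z / (z - l)) (fun z => (c : ℂ) / (z - l)) hR0 {z : ℂ | 0 ≤ z.im ∧ z ≠ l} (fun z hz h => ⟨hz, hside z hz h⟩)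
      (((cP_contOn α θ h0 h1).mono (fun z hz => hz.1)).div (by fun_prop) (fun z hz => sub_ne_zero.2 hz.2))
      (continuousOn_const.div (by fun_prop) (fun z hz => sub_ne_zero.2 hz.2))]
    exact tI_congr R _ _ hR0 (fun z hz h => hval z (hside z hz h))
  have hb : ‖tI R (fun z => cP α θ z / (z - l))‖ ≤ 4 * R * (((R - 1) ^ (α - 1)) ^ θ / (R - l)) := by
    refine tI_norm R _ _ hR0 (fun z hz h => ?_)
    have hzR : R ≤ ‖z‖ := by
      rcases h with h | h | h
      · have := Complex.abs_re_le_norm z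
        rwa [h, abs_of_pos hR0] at this
      · have := Complex.abs_re_le_norm z
        rwa [h, abs_neg, abs_of_pos hR0] at this
      · have := Complex.abs_im_le_norm z
        rwa [h, abs_of_pos hR0] at this
    have h2 : R - l ≤ ‖z - l‖ := by
      have := norm_sub_norm_le z (l : ℂ)
      rw [Complex.norm_real, Real.norm_of_nonneg hl.le] at this
      linarith
    rw [norm_div]
    have h3 : 0 ≤ ((R - 1) ^ (α - 1)) ^ θ :=
      Real.rpow_nonneg (Real.rpow_nonneg (by linarith) _) _
    exact div_le_div₀ h3 (cP_norm α θ h0 h1 hθ z hz R hR1 hzR) (by linarith) h2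
  -- bottom side
  have hHint : ∀ a b : ℝ, IntervalIntegrable (fun x : ℝ => H x) volume a b := fun a b =>
    (hHc.comp_continuous (f := fun x : ℝ => (x : ℂ)) (by fun_prop) (fun x => by simp)).intervalIntegrable a b
  have hbot : (∫ x in (-R)..R, H x).im = Real.pi * ∫ y in (0:ℝ)..R, hB α θ y / (y + l) := by
    rw [← intervalIntegral.integral_add_adjacent_intervals (hHint (-R) 0) (hHint 0 R), Complex.add_im]
    have him : ∀ a b : ℝ, (∫ x in a..b, H x).im = ∫ x in a..b, (H x).im := fun a b =>
      (Complex.imCLM.intervalIntegral_comp_comm (hHint a b)).symm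
    rw [him, him]
    have z2 : ∫ x in (0:ℝ)..R, (H x).im = 0 := by
      have : ∫ x in (0:ℝ)..R, (H x).im = ∫ x in (0:ℝ)..R, (0:ℝ) := by
        apply intervalIntegral.integral_congr_ae
        have : ∀ᵐ x : ℝ, x ≠ l := by simp [ae_iff]
        filter_upwards [this] with x hx hx2
        rw [uIoc_of_le hR0.le] at hx2
        rw [hval x (by exact_mod_cast hx), cP_pos α θ h0 x hx2.1.le, ← Complex.ofReal_sub,
          ← Complex.ofReal_div, ← Complex.ofReal_div, ← Complex.ofReal_sub, Complex.ofReal_im]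
      rw [this]; simp
    rw [z2, add_zero]
    have z1 : ∫ x in (-R)..0, (H x).im = ∫ y in (0:ℝ)..R, (H (-y : ℝ)).im := by
      have := intervalIntegral.integral_comp_neg (a := 0) (b := R) (fun x : ℝ => (H x).im)
      rw [this, neg_zero]
    rw [z1, ← intervalIntegral.integral_const_mul]
    refine intervalIntegral.integral_congr (fun y hy => ?_)
    rw [uIcc_of_le hR0.le] at hy
    have hne : ((-y : ℝ) : ℂ) ≠ l := by
      have := hy.1
      exact_mod_cast (by linarith : -y < l).ne
    have hyl : 0 < y + l := by linarith [hy.1]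
    rw [hval _ hne, ← Complex.ofReal_sub, ← Complex.ofReal_div, Complex.sub_im, Complex.ofReal_im,
      Complex.div_ofReal_im, hB]
    push_cast
    have : -y - l ≠ 0 := by linarith
    have := Real.pi_ne_zero
    field_simp
    ring
  have hIm := congrArg Complex.im hrect2
  rw [Complex.add_im, htI, Complex.sub_im, tI_inv R l c hl hR, hbot, Complex.zero_im] at hIm
  have hfin : (∫ y in (0:ℝ)..R, hB α θ y / (y + l)) - c
      = -(tI R (fun z => cP α θ z / (z - l))).im / Real.pi := by
    have := Real.pi_ne_zero
    field_simp
    linarith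
  rw [hfin, abs_div, abs_neg, abs_of_pos Real.pi_pos]
  exact div_le_div_of_nonneg_right ((Complex.abs_im_le_norm _).trans hb) Real.pi_pos.le

lemma bound_tendsto (α θ l : ℝ) (h1 : α < 1) (hθ : 0 < θ) :
    Tendsto (fun R : ℝ => 4 * R * (((R - 1) ^ (α - 1)) ^ θ / (R - l)) / Real.pi) atTop (𝓝 0) := by
  have a1 : Tendsto (fun R : ℝ => ((R - 1) ^ (α - 1)) ^ θ) atTop (𝓝 0) := by
    have : Tendsto (fun R : ℝ => R ^ (α - 1)) atTop (𝓝 0) := by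
      have := tendsto_rpow_neg_atTop (y := 1 - α) (by linarith)
      simpa using this
    have := this.comp (tendsto_atTop_add_const_right atTop (-1 : ℝ) tendsto_id)
    have := this.rpow_const (p := θ) (Or.inr hθ.le)
    rw [Real.zero_rpow hθ.ne'] at this
    exact this
  have a2 : Tendsto (fun R : ℝ => R / (R - l)) atTop (𝓝 1) := by
    have h3 : Tendsto (fun R : ℝ => R - l) atTop atTop :=
      tendsto_atTop_add_const_right atTop (-l : ℝ) tendsto_id
    have h4 : Tendsto (fun R : ℝ => 1 + l * (R - l)⁻¹) atTop (𝓝 (1 + l * 0)) :=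
      (h3.inv_tendsto_atTop.const_mul l).const_add 1
    rw [mul_zero, add_zero] at h4
    refine h4.congr' ?_
    filter_upwards [eventually_gt_atTop l] with R hR
    have : R - l ≠ 0 := by linarith
    field_simp
    ring
  have := ((a1.mul a2).const_mul (4 / Real.pi))
  rw [zero_mul, mul_zero] at this
  refine this.congr (fun R => ?_)
  ring

lemma stieltjes_tendsto (α θ l : ℝ) (h0 : 0 < α) (h1 : α < 1) (hθ : 0 < θ) (hl : 0 < l) :
    Tendsto (fun R : ℝ => ∫ y in (0:ℝ)..R, hB α θ y / (y + l)) atTop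
      (𝓝 (((1 + l) ^ α - l ^ α) ^ θ)) := by
  rw [tendsto_iff_norm_sub_tendsto_zero]
  refine squeeze_zero' (Eventually.of_forall fun _ => norm_nonneg _) ?_ (bound_tendsto α θ l h1 hθ)
  filter_upwards [eventually_gt_atTop l, eventually_gt_atTop 1] with R hR hR1
  exact cauchy_step α θ l R h0 h1 hθ hl hR hR1

lemma den_pos (α u v : ℝ) (h0 : 0 < α) (h1 : α < 1) (hu : 0 < u) :
    0 < v ^ 2 - 2 * u * v * Real.cos (Real.pi * α) + u ^ 2 := by
  have hs := sin_pos' α h0 h1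
  have := Real.sin_sq_add_cos_sq (Real.pi * α)
  have e : v ^ 2 - 2 * u * v * Real.cos (Real.pi * α) + u ^ 2
    = (v - u * Real.cos (Real.pi * α)) ^ 2 + (u * Real.sin (Real.pi * α)) ^ 2 := by
    linear_combination -u ^ 2 * this
  rw [e]
  positivity

lemma normSq_cA (α y : ℝ) (hy : 0 ≤ y) (hy1 : y ≤ 1) :
    Complex.normSq (cA α (-y)) = ((1 - y) ^ α) ^ 2 - 2 * y ^ α * (1 - y) ^ α * Real.cos (Real.pi * α)
      + (y ^ α) ^ 2 := by
  rw [cA_neg1 α y hy hy1, Complex.normSq_apply]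
  simp only [Complex.sub_re, Complex.sub_im, Complex.ofReal_re, Complex.ofReal_im, Complex.re_ofReal_mul,
    Complex.im_ofReal_mul, Complex.exp_ofReal_mul_I_re, Complex.exp_ofReal_mul_I_im]
  have := Real.sin_sq_add_cos_sq (Real.pi * α)
  linear_combination (y ^ α) ^ 2 * this

lemma sq_rpow (x α : ℝ) (hx : 0 ≤ x) : (x ^ α) ^ 2 = x ^ (2 * α) := by
  rw [← Real.rpow_natCast, ← Real.rpow_mul hx, mul_comm]; norm_num

/-- Explicit cdf. -/
noncomputable def gB (α y : ℝ) : ℝ := -(cA α (-y)).arg / ((1 - α) * Real.pi)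

lemma gB_contOn (α : ℝ) (h0 : 0 < α) (h1 : α < 1) : Continuous (gB α) := by
  unfold gB
  have : Continuous (fun y : ℝ => cA α (-y)) := by
    apply (cA_contOn α h0).comp_continuous (by fun_prop)
    intro y; simp
  have h2 : Continuous (fun y : ℝ => (cA α (-y)).arg) := by
    rw [continuous_iff_continuousAt]
    intro y
    exact (Complex.continuousAt_arg (cA_slit α h0 h1 _ (by simp))).comp
      (f := fun y : ℝ => cA α (-y)) this.continuousAt
  exact h2.neg.div_const _

lemma gB_deriv (α y : ℝ) (h0 : 0 < α) (h1 : α < 1) (hy : 0 < y) (hy1 : y < 1) :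
    HasDerivAt (gB α) (bfryDensity α y) y := by
  set e : ℂ := Complex.exp ((Real.pi * α : ℝ) * Complex.I) with he
  set B : ℝ → ℂ := fun y => (((1 - y) ^ α : ℝ) : ℂ) - (y ^ α : ℝ) * e with hB
  have d1 : HasDerivAt (fun y : ℝ => (1 - y) ^ α) (-(α * (1 - y) ^ (α - 1))) y := by
    have := ((hasDerivAt_id y).const_sub 1).rpow_const (p := α) (Or.inl (by simp; linarith))
    exact this.congr_deriv (by simp only [id]; ring)
  have d2 : HasDerivAt (fun y : ℝ => y ^ α) (α * y ^ (α - 1)) y :=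
    Real.hasDerivAt_rpow_const (Or.inl hy.ne')
  have hBd : HasDerivAt B (((-(α * (1 - y) ^ (α - 1)) : ℝ) : ℂ) - (α * y ^ (α - 1) : ℝ) * e) y :=
    d1.ofReal_comp.sub (d2.ofReal_comp.mul_const e)
  have hBy : B y = cA α (-y) := (cA_neg1 α y hy.le hy1.le).symm
  have hlog := hBd.clog_real (by rw [hBy]; exact cA_slit α h0 h1 _ (by simp))
  have him := Complex.imCLM.hasFDerivAt.comp_hasDerivAt y hlog
  have hg := (him.neg.div_const ((1 - α) * Real.pi))
  have hev : gB α =ᶠ[𝓝 y] fun t : ℝ => -(Complex.log (B t)).im / ((1 - α) * Real.pi) := by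
    filter_upwards [Ioo_mem_nhds hy hy1] with t ht
    simp only [gB, Complex.log_im, hB]
    rw [cA_neg1 α t ht.1.le ht.2.le]
  refine HasDerivAt.congr_of_eventuallyEq ?_ hev
  refine hg.congr_deriv ?_
  rw [Complex.imCLM_apply, hBy, Complex.div_im, normSq_cA α y hy.le hy1.le, cA_neg1 α y hy.le hy1.le]
  simp only [he, Complex.sub_re, Complex.sub_im, Complex.ofReal_re, Complex.ofReal_im, Complex.re_ofReal_mul,
    Complex.im_ofReal_mul, Complex.exp_ofReal_mul_I_re, Complex.exp_ofReal_mul_I_im, bfryDensity]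
  have hD := den_pos α (y ^ α) ((1 - y) ^ α) h0 h1 (by positivity)
  have hP : (1 - y) ^ α = (1 - y) * (1 - y) ^ (α - 1) := by
    rw [mul_comm, ← Real.rpow_add_one (by linarith)]; congr 1; ring
  have hQ : y ^ α = y * y ^ (α - 1) := by
    rw [mul_comm, ← Real.rpow_add_one hy.ne']; congr 1; ring
  rw [← sq_rpow y α hy.le, ← sq_rpow (1 - y) α (by linarith)]
  have e2 : (y ^ α) ^ 2 - 2 * y ^ α * (1 - y) ^ α * Real.cos (Real.pi * α) + ((1 - y) ^ α) ^ 2 =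
    ((1 - y) ^ α) ^ 2 - 2 * y ^ α * (1 - y) ^ α * Real.cos (Real.pi * α) + (y ^ α) ^ 2 := by ring
  rw [e2]
  set D := ((1 - y) ^ α) ^ 2 - 2 * y ^ α * (1 - y) ^ α * Real.cos (Real.pi * α) + (y ^ α) ^ 2 with hDd
  rw [hP, hQ]
  have h1a : 1 - α ≠ 0 := by linarith
  have := Real.pi_ne_zero
  have := hD.ne'
  field_simp
  ring

lemma bfryDensity_nonneg (α y : ℝ) (h0 : 0 < α) (h1 : α < 1) (hy : 0 < y) (hy1 : y < 1) :
    0 ≤ bfryDensity α y := by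
  have hs := sin_pos' α h0 h1
  have hD := den_pos α (y ^ α) ((1 - y) ^ α) h0 h1 (by positivity)
  have h2 : 0 < 1 - y := by linarith
  have h3 : 0 < 1 - α := by linarith
  have hpi := Real.pi_pos
  unfold bfryDensity
  rw [← sq_rpow y α hy.le, ← sq_rpow (1 - y) α h2.le]
  refine mul_nonneg (by positivity) (div_nonneg (by positivity) ?_)
  linarith

lemma gB_zero (α : ℝ) (h0 : 0 < α) : gB α 0 = 0 := by
  have := cA_pos α 0 le_rfl
  rw [gB]
  simp only [Complex.ofReal_zero, neg_zero] at this ⊢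
  rw [this]
  simp [Real.zero_rpow h0.ne']

lemma cdf_eq (α y : ℝ) (h0 : 0 < α) (h1 : α < 1) (hy : 0 ≤ y) (hy1 : y ≤ 1) :
    bfryCDF α y = gB α y := by
  have hc := (gB_contOn α h0 h1).continuousOn (s := Icc 0 y)
  have hd : ∀ x ∈ Ioo 0 y, HasDerivAt (gB α) (bfryDensity α x) x := fun x hx =>
    gB_deriv α x h0 h1 hx.1 (by linarith [hx.2])
  have hi := intervalIntegral.integrableOn_deriv_of_nonneg hc hd
    (fun x hx => bfryDensity_nonneg α x h0 h1 hx.1 (by linarith [hx.2]))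
  rw [bfryCDF, intervalIntegral.integral_eq_sub_of_hasDerivAt_of_le hy hc hd
    ((intervalIntegrable_iff_integrableOn_Ioc_of_le hy).2 hi), gB_zero α h0, sub_zero]

lemma arg_cA_ge (α y : ℝ) (h0 : 0 < α) (h1 : α < 1) (hy : 1 ≤ y) :
    (cA α (-y)).arg = Real.pi * α - Real.pi ∧ ‖cA α (-y)‖ = y ^ α - (y - 1) ^ α := by
  have hlt : (y - 1) ^ α < y ^ α := Real.rpow_lt_rpow (by linarith) (by linarith) h0
  have hpi := Real.pi_pos
  have e : cA α (-y) = ((y ^ α - (y - 1) ^ α : ℝ) : ℂ) *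
      Complex.exp ((Real.pi * α - Real.pi : ℝ) * Complex.I) := by
    rw [cA_neg2 α y hy]
    have : ((Real.pi * α - Real.pi : ℝ) : ℂ) * Complex.I
      = ((Real.pi * α : ℝ) : ℂ) * Complex.I - Real.pi * Complex.I := by push_cast; ring
    rw [this, Complex.exp_sub, Complex.exp_pi_mul_I]
    ring
  rw [e]
  constructor
  · rw [Complex.arg_real_mul _ (by linarith), Complex.arg_exp_mul_I, toIocMod_eq_self]
    constructor
    · nlinarith
    · nlinarith
  · rw [norm_mul, Complex.norm_exp_ofReal_mul_I, Complex.norm_real, Real.norm_of_nonneg (by linarith), mul_one]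

lemma gB_mem (α y : ℝ) (h0 : 0 < α) (h1 : α < 1) (hy : 0 ≤ y) : 0 ≤ gB α y ∧ gB α y ≤ 1 := by
  have hge : ∀ y : ℝ, 1 ≤ y → gB α y = 1 := by
    intro y hy
    rw [gB, (arg_cA_ge α y h0 h1 hy).1]
    have := Real.pi_ne_zero
    have h1a : 1 - α ≠ 0 := by linarith
    field_simp
    ring
  rcases le_total y 1 with h | h
  · have hm : MonotoneOn (gB α) (Icc 0 1) := by
      apply monotoneOn_of_deriv_nonneg (convex_Icc 0 1) (gB_contOn α h0 h1).continuousOn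
      · rw [interior_Icc]
        exact fun x hx => (gB_deriv α x h0 h1 hx.1 hx.2).differentiableAt.differentiableWithinAt
      · rw [interior_Icc]
        intro x hx
        rw [(gB_deriv α x h0 h1 hx.1 hx.2).deriv]
        exact bfryDensity_nonneg α x h0 h1 hx.1 hx.2
    have a := hm (left_mem_Icc.2 zero_le_one) ⟨hy, h⟩ hy
    have b := hm ⟨hy, h⟩ (right_mem_Icc.2 zero_le_one) h
    rw [gB_zero α h0] at a
    rw [hge 1 le_rfl] at b
    exact ⟨a, b⟩
  · rw [hge y h]; norm_num

lemma hB_formula (α σ y : ℝ) (h1 : α < 1) :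
    hB α (σ / (1 - α)) y = ‖cA α (-y)‖ ^ (σ / (1 - α)) * Real.sin (Real.pi * σ * gB α y) / Real.pi := by
  rw [hB, cP, Complex.cpow_ofReal_im, ← mul_neg, ← Real.sin_neg]
  congr 3
  rw [gB]
  have := Real.pi_ne_zero
  have h1a : 1 - α ≠ 0 := by linarith
  field_simp

lemma hB_nonneg (α σ y : ℝ) (h0 : 0 < α) (h1 : α < 1) (hσ0 : 0 < σ) (hσ1 : σ ≤ 1) (hy : 0 ≤ y) :
    0 ≤ hB α (σ / (1 - α)) y := by
  rw [hB_formula α σ y h1]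
  have ⟨a, b⟩ := gB_mem α y h0 h1 hy
  have hpi := Real.pi_pos
  have : 0 ≤ Real.sin (Real.pi * σ * gB α y) := by
    apply Real.sin_nonneg_of_nonneg_of_le_pi (by positivity)
    have : σ * gB α y ≤ 1 := by nlinarith
    nlinarith
  positivity

lemma mean_eq (α σ w : ℝ) (h0 : 0 < α) (h1 : α < 1) (hw : 0 < w) :
    bfryMeanDensity α σ w = hB α (σ / (1 - α)) w⁻¹ * w⁻¹ := by
  have h1a : 1 - α ≠ 0 := by linarith
  have hpi := Real.pi_ne_zero
  have hw' : 0 < w⁻¹ := by positivity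
  set θ := σ / (1 - α) with hθ
  have ex : w ^ (-(σ * α / (1 - α)) - 1) = (w⁻¹ ^ α) ^ θ * w⁻¹ := by
    rw [Real.rpow_sub_one hw.ne', Real.rpow_neg hw.le, Real.inv_rpow hw.le,
      Real.inv_rpow (by positivity), ← Real.rpow_mul hw.le, div_eq_mul_inv]
    congr 3
    rw [hθ]; ring
  rw [bfryMeanDensity, hB_formula α σ _ h1]
  split_ifs with h
  · have hy : 1 ≤ w⁻¹ := (one_le_inv₀ hw).2 h
    obtain ⟨a, b⟩ := arg_cA_ge α w⁻¹ h0 h1 hy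
    have hg : gB α w⁻¹ = 1 := by
      rw [gB, a]; field_simp; ring
    have e1 : w⁻¹ - 1 = w⁻¹ * (1 - w) := by field_simp
    have e2 : w⁻¹ ^ α - (w⁻¹ - 1) ^ α = w⁻¹ ^ α * (1 - (1 - w) ^ α) := by
      rw [e1, Real.mul_rpow hw'.le (by linarith)]; ring
    have e3 : 0 ≤ 1 - (1 - w) ^ α := by
      have := Real.rpow_le_one (by linarith : 0 ≤ 1 - w) (by linarith) h0.le
      linarith
    rw [ex, b, hg, e2, Real.mul_rpow (by positivity) e3, mul_one]
    ring
  · push Not at h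
    have hy : w⁻¹ ≤ 1 := inv_le_one_of_one_le₀ h.le
    have e1 : 1 - w⁻¹ = w⁻¹ * (w - 1) := by field_simp
    have hD := den_pos α 1 ((w - 1) ^ α) h0 h1 one_pos
    have en : ‖cA α (-(w⁻¹ : ℝ))‖ = w⁻¹ ^ α *
        Real.sqrt ((w - 1) ^ (2 * α) - 2 * (w - 1) ^ α * Real.cos (Real.pi * α) + 1) := by
      rw [← sq_rpow _ _ (by linarith)]
      have : ‖cA α (-(w⁻¹ : ℝ))‖ = Real.sqrt (Complex.normSq (cA α (-(w⁻¹ : ℝ)))) := rfl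
      rw [this, normSq_cA α _ hw'.le hy, e1, Real.mul_rpow hw'.le (by linarith)]
      rw [← Real.sqrt_sq (by positivity : 0 ≤ w⁻¹ ^ α), ← Real.sqrt_mul (by positivity),
        Real.sqrt_sq (by positivity : 0 ≤ w⁻¹ ^ α)]
      congr 1; ring
    have hnn : 0 ≤ (w - 1) ^ (2 * α) - 2 * (w - 1) ^ α * Real.cos (Real.pi * α) + 1 := by
      rw [← sq_rpow _ _ (by linarith)]
      linarith
    have e4 : σ / (2 * (1 - α)) = 1 / 2 * θ := by rw [hθ]; field_simp
    rw [ex, en, Real.mul_rpow (by positivity) (Real.sqrt_nonneg _), one_div,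
      cdf_eq α _ h0 h1 hw'.le hy, Real.sqrt_eq_rpow, ← Real.rpow_mul hnn, e4]
    ring

lemma mean_nonneg (α σ w : ℝ) (h0 : 0 < α) (h1 : α < 1) (hσ0 : 0 < σ) (hσ1 : σ ≤ 1) (hw : 0 < w) :
    0 ≤ bfryMeanDensity α σ w := by
  rw [mean_eq α σ w h0 h1 hw]
  exact mul_nonneg (hB_nonneg α σ _ h0 h1 hσ0 hσ1 (by positivity)) (by positivity)

lemma stieltjes_hB (α σ l : ℝ) (h0 : 0 < α) (h1 : α < 1) (hσ0 : 0 < σ) (hσ1 : σ ≤ 1) (hl : 0 < l) :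
    IntegrableOn (fun y => hB α (σ / (1 - α)) y / (y + l)) (Ioi 0) ∧
    ∫ y in Ioi (0:ℝ), hB α (σ / (1 - α)) y / (y + l) = ((1 + l) ^ α - l ^ α) ^ (σ / (1 - α)) := by
  have hθ : 0 < σ / (1 - α) := div_pos hσ0 (by linarith)
  set θ := σ / (1 - α) with hθd
  have ht := stieltjes_tendsto α θ l h0 h1 hθ hl
  have hint : IntegrableOn (fun y => hB α θ y / (y + l)) (Ioi 0) := by
    refine integrableOn_Ioi_of_intervalIntegral_norm_tendsto (l := atTop) (b := fun R : ℝ => R)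
      (((1 + l) ^ α - l ^ α) ^ θ) 0 ?_ tendsto_id ?_
    · intro R
      refine IntegrableOn.mono_set (t := Icc 0 R) ?_ Ioc_subset_Icc_self
      refine ContinuousOn.integrableOn_Icc ?_
      refine (hB_cont α θ h0 h1).continuousOn.div (by fun_prop) (fun y hy => ?_)
      have := hy.1
      positivity
    · refine ht.congr' ?_
      filter_upwards [eventually_ge_atTop 0] with R hR
      refine intervalIntegral.integral_congr (fun y hy => ?_)
      rw [uIcc_of_le hR] at hy
      have h2 := hB_nonneg α σ y h0 h1 hσ0 hσ1 hy.1
      have := hy.1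
      exact (Real.norm_of_nonneg (by positivity)).symm
  exact ⟨hint, tendsto_nhds_unique (intervalIntegral_tendsto_integral_Ioi 0 hint tendsto_id) ht⟩

lemma mean_pos_l (α σ l : ℝ) (h0 : 0 < α) (h1 : α < 1) (hσ0 : 0 < σ) (hσ1 : σ ≤ 1) (hl : 0 < l) :
    IntegrableOn (fun w => bfryMeanDensity α σ w / (1 + l * w)) (Ioi 0) ∧
    ∫ w in Ioi (0:ℝ), bfryMeanDensity α σ w / (1 + l * w) = ((1 + l) ^ α - l ^ α) ^ (σ / (1 - α)) := by
  obtain ⟨a, b⟩ := stieltjes_hB α σ l h0 h1 hσ0 hσ1 hl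
  have a' := (integrableOn_Ioi_comp_rpow_iff (fun y => hB α (σ / (1 - α)) y / (y + l))
    (p := -1) (by norm_num)).2 a
  have b' := integral_comp_rpow_Ioi (fun y => hB α (σ / (1 - α)) y / (y + l)) (p := -1) (by norm_num)
  have hcong : EqOn (fun x : ℝ => (|(-1 : ℝ)| * x ^ ((-1 : ℝ) - 1)) •
      (fun y => hB α (σ / (1 - α)) y / (y + l)) (x ^ (-1 : ℝ)))
      (fun w => bfryMeanDensity α σ w / (1 + l * w)) (Ioi 0) := by
    intro w hw
    have hw0 : 0 < w := hw
    simp only [smul_eq_mul]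
    rw [mean_eq α σ w h0 h1 hw0, Real.rpow_sub_one hw0.ne', Real.rpow_neg_one, abs_neg, abs_one]
    have : 1 + l * w ≠ 0 := by positivity
    have : w⁻¹ + l ≠ 0 := by positivity
    field_simp
  rw [setIntegral_congr_fun measurableSet_Ioi hcong, b] at b'
  exact ⟨a'.congr_fun hcong measurableSet_Ioi, b'⟩

lemma mean_zero (α σ : ℝ) (h0 : 0 < α) (h1 : α < 1) (hσ0 : 0 < σ) (hσ1 : σ ≤ 1) :
    IntegrableOn (bfryMeanDensity α σ) (Ioi 0) ∧ ∫ w in Ioi (0:ℝ), bfryMeanDensity α σ w = 1 := by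
  have hθ : 0 < σ / (1 - α) := div_pos hσ0 (by linarith)
  set μ := volume.restrict (Ioi (0:ℝ)) with hμ
  have hmem : ∀ᵐ w ∂μ, 0 < w := ae_restrict_mem measurableSet_Ioi
  have hnn : 0 ≤ᵐ[μ] bfryMeanDensity α σ := by
    filter_upwards [hmem] with w hw
    exact mean_nonneg α σ w h0 h1 hσ0 hσ1 hw
  have hmeas : AEStronglyMeasurable (bfryMeanDensity α σ) μ := by
    have h2 := (mean_pos_l α σ 1 h0 h1 hσ0 hσ1 one_pos).1.aestronglyMeasurable
    have h3 : AEStronglyMeasurable (fun w : ℝ => 1 + 1 * w) μ :=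
      Continuous.aestronglyMeasurable (by fun_prop)
    refine (h2.mul h3).congr ?_
    filter_upwards [hmem] with w hw
    have : 1 + 1 * w ≠ 0 := by positivity
    simp only [Pi.mul_apply]
    field_simp
  set c : ℕ → ℝ := fun n => 1 / ((n : ℝ) + 1) with hc
  have hcpos : ∀ n, 0 < c n := fun n => by positivity
  have hct : Tendsto c atTop (𝓝 0) := tendsto_one_div_add_atTop_nhds_zero_nat
  have hanti : Antitone c := fun m n h => by
    have : (m : ℝ) ≤ n := by exact_mod_cast h
    simp only [hc]
    gcongr
  have key := lintegral_tendsto_of_tendsto_of_monotone (μ := μ)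
    (f := fun n w => ENNReal.ofReal (bfryMeanDensity α σ w / (1 + c n * w)))
    (F := fun w => ENNReal.ofReal (bfryMeanDensity α σ w))
    (fun n => ((mean_pos_l α σ (c n) h0 h1 hσ0 hσ1 (hcpos n)).1.aestronglyMeasurable.aemeasurable).ennreal_ofReal)
    (by
      filter_upwards [hmem, hnn] with w hw hf m n hmn
      apply ENNReal.ofReal_le_ofReal
      have := hcpos n
      have := hanti hmn
      exact div_le_div_of_nonneg_left hf (by positivity) (by gcongr))
    (by
      filter_upwards [hmem] with w hw
      apply ENNReal.tendsto_ofReal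
      have h5 : Tendsto (fun n => bfryMeanDensity α σ w / (1 + c n * w)) atTop
          (𝓝 (bfryMeanDensity α σ w / (1 + 0 * w))) :=
        tendsto_const_nhds.div ((hct.mul_const w).const_add 1) (by simp)
      simpa using h5)
  have hval : ∀ n, ∫⁻ w, ENNReal.ofReal (bfryMeanDensity α σ w / (1 + c n * w)) ∂μ
      = ENNReal.ofReal (((1 + c n) ^ α - (c n) ^ α) ^ (σ / (1 - α))) := by
    intro n
    obtain ⟨a, b⟩ := mean_pos_l α σ (c n) h0 h1 hσ0 hσ1 (hcpos n)
    rw [← b, ofReal_integral_eq_lintegral_ofReal a]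
    filter_upwards [hmem, hnn] with w hw hf
    have := hcpos n
    exact div_nonneg hf (by positivity)
  have hlim : Tendsto (fun n => ENNReal.ofReal (((1 + c n) ^ α - (c n) ^ α) ^ (σ / (1 - α)))) atTop
      (𝓝 (ENNReal.ofReal 1)) := by
    apply ENNReal.tendsto_ofReal
    have h6 := (((hct.const_add 1).rpow_const (p := α) (Or.inr h0.le)).sub
      (hct.rpow_const (p := α) (Or.inr h0.le))).rpow_const (p := σ / (1 - α)) (Or.inr hθ.le)
    simpa [Real.zero_rpow h0.ne'] using h6
  simp only [hval] at key
  have heq := tendsto_nhds_unique key hlim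
  constructor
  · refine ⟨hmeas, ?_⟩
    rw [hasFiniteIntegral_iff_ofReal hnn, heq]
    exact ENNReal.ofReal_lt_top
  · rw [integral_eq_lintegral_of_nonneg_ae hnn hmeas, heq]
    simp

lemma mean_l (α σ l : ℝ) (h0 : 0 < α) (h1 : α < 1) (hσ0 : 0 < σ) (hσ1 : σ ≤ 1) (hl : 0 ≤ l) :
    IntegrableOn (fun w => bfryMeanDensity α σ w / (1 + l * w)) (Ioi 0) ∧
    ∫ w in Ioi (0:ℝ), bfryMeanDensity α σ w / (1 + l * w) = ((1 + l) ^ α - l ^ α) ^ (σ / (1 - α)) := by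
  rcases hl.lt_or_eq with h | h
  · exact mean_pos_l α σ l h0 h1 hσ0 hσ1 h
  · subst h
    have := mean_zero α σ h0 h1 hσ0 hσ1
    simpa [Real.zero_rpow h0.ne'] using this

lemma final_l (α σ l : ℝ) (h0 : 0 < α) (h1 : α < 1) (hσ0 : 0 < σ) (hσ1 : σ ≤ 1) (hl : 0 ≤ l) :
    ∫ x in Ioi (0:ℝ), Real.exp (-l * x) * bfryIncrementDensity α σ x
        = ((1 + l) ^ α - l ^ α) ^ (σ / (1 - α)) := by
  obtain ⟨a, b⟩ := mean_l α σ l h0 h1 hσ0 hσ1 hl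
  set μ := volume.restrict (Ioi (0:ℝ)) with hμ
  have hmem : ∀ᵐ w ∂μ, 0 < w := ae_restrict_mem measurableSet_Ioi
  set K : ℝ → ℝ → ℝ := fun x w =>
    Real.exp (-l * x) * (Real.exp (-x / w) * w⁻¹ * bfryMeanDensity α σ w) with hK
  have hform : ∀ w : ℝ, 0 < w → ∀ x, K x w
      = Real.exp (-(l + w⁻¹) * x) * (w⁻¹ * bfryMeanDensity α σ w) := by
    intro w hw x
    simp only [hK]
    have : -(l + w⁻¹) * x = -l * x + -x / w := by ring
    rw [this, Real.exp_add]
    ring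
  have hint : ∀ w : ℝ, 0 < w → ∫ x, K x w ∂μ = bfryMeanDensity α σ w / (1 + l * w) := by
    intro w hw
    simp only [hform w hw]
    have hp : 0 < l + w⁻¹ := by positivity
    rw [integral_mul_const, hμ, integral_exp_mul_Ioi (by linarith)]
    have : 1 + l * w ≠ 0 := by positivity
    simp only [mul_zero, Real.exp_zero]
    have e : l + w⁻¹ = (1 + l * w) * w⁻¹ := by field_simp; ring
    rw [e]
    field_simp
  have hmeasf := (mean_zero α σ h0 h1 hσ0 hσ1).1.aestronglyMeasurable
  have hKm : AEStronglyMeasurable (Function.uncurry K) (μ.prod μ) := by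
    have h3 : AEStronglyMeasurable (fun p : ℝ × ℝ => bfryMeanDensity α σ p.2) (μ.prod μ) :=
      hmeasf.comp_snd
    have h4 : AEStronglyMeasurable (fun p : ℝ × ℝ => Real.exp (-l * p.1)) (μ.prod μ) :=
      Measurable.aestronglyMeasurable (by fun_prop)
    have h5 : AEStronglyMeasurable (fun p : ℝ × ℝ => Real.exp (-p.1 / p.2) * p.2⁻¹) (μ.prod μ) :=
      Measurable.aestronglyMeasurable (by fun_prop)
    exact h4.mul (h5.mul h3)
  have hKi : Integrable (Function.uncurry K) (μ.prod μ) := by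
    rw [integrable_prod_iff' hKm]
    constructor
    · filter_upwards [hmem] with w hw
      simp only [Function.uncurry_apply_pair, hform w hw]
      have hp : 0 < l + w⁻¹ := by positivity
      exact Integrable.mul_const (integrableOn_exp_mul_Ioi (by linarith) 0) _
    · refine Integrable.congr a ?_
      filter_upwards [hmem] with w hw
      rw [← hint w hw]
      refine integral_congr_ae (Eventually.of_forall fun x => ?_)
      have := mean_nonneg α σ w h0 h1 hσ0 hσ1 hw
      simp only [Function.uncurry_apply_pair]
      rw [Real.norm_of_nonneg]
      rw [hform w hw]
      positivity
  calc ∫ x, Real.exp (-l * x) * bfryIncrementDensity α σ x ∂μ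
      = ∫ x, ∫ w, K x w ∂μ ∂μ := by
        refine integral_congr_ae (Eventually.of_forall fun x => ?_)
        simp only [hK, bfryIncrementDensity]
        rw [integral_const_mul]
    _ = ∫ w, ∫ x, K x w ∂μ ∂μ := integral_integral_swap hKi
    _ = ∫ w, bfryMeanDensity α σ w / (1 + l * w) ∂μ := by
        refine integral_congr_ae ?_
        filter_upwards [hmem] with w hw
        exact hint w hw
    _ = _ := b

/-- Theorem 5.1: `g_{α,σ}` is a probability density on `(0,∞)` and
for every `λ ≥ 0`, `∫₀^∞ e^{−λx} g_{α,σ}(x) dx = ((1+λ)^α − λ^α)^{σ/(1−α)}`. -/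
theorem bfry_increment_density
    (α σ : ℝ) (hα0 : 0 < α) (hα1 : α < 1) (hσ0 : 0 < σ) (hσ1 : σ ≤ 1) :
    (∀ x ∈ Set.Ioi (0:ℝ), 0 ≤ bfryIncrementDensity α σ x) ∧
    (∫ x in Set.Ioi (0:ℝ), bfryIncrementDensity α σ x = 1) ∧
    (∀ l : ℝ, 0 ≤ l →
      ∫ x in Set.Ioi (0:ℝ), Real.exp (-l * x) * bfryIncrementDensity α σ x
        = ((1 + l) ^ α - l ^ α) ^ (σ / (1 - α))) := by
  have hl := fun (l : ℝ) (h : 0 ≤ l) => final_l α σ l hα0 hα1 hσ0 hσ1 h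
  refine ⟨fun x _ => setIntegral_nonneg measurableSet_Ioi (fun w hw => ?_), ?_, hl⟩
  · have := mean_nonneg α σ w hα0 hα1 hσ0 hσ1 hw
    have : 0 < w := hw
    positivity
  · have := hl 0 le_rfl
    simpa [Real.zero_rpow hα0.ne'] using this
end
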